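/- arXiv:1209.4945 — 3 statements merged into one kernel-verified Lean document; each statement's English description precedes it below -/
import Mathlib

section
/- Let t₁, t₂ ≥ 0 with t₁ + t₂ = 1. The measure ρ_{t₁,t₂} on Gr²(V) is quasi-invariant under the componentwise action of GLB × GLB, with cocycle: for every (g,h) ∈ GLB × GLB and every measurable set A ⊆ Gr²(V), ρ_{t₁,t₂}((g,h)·A) = ∫_A q^{Σ_k k·(Sym(X)_k − Sym(gX)_k) + Σ_k k·(Sym(Y)_k − Sym(hY)_k)} ρ_{t₁,t₂}(d(X,Y)), both sums having only finitely many nonzero terms. (Corollary 5.10.) -/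
open MeasureTheory

variable (F : Type) [Field F] [Fintype F] [DecidableEq F]

/-- `V = ⊕_{i≥0} F`: the `F`-vector space of finitely supported sequences. -/
abbrev Vinf := ℕ →₀ F

/-- `V_n`: the span of the first `n` standard basis vectors of `V`. -/
def Vn (n : ℕ) : Submodule F (Vinf F) where
  carrier := {v | ∀ i : ℕ, n ≤ i → v i = 0}
  add_mem' := by
    intro a b ha hb i hi
    simp [Finsupp.add_apply, ha i hi, hb i hi]
  zero_mem' := by
    intro i hi
    simp
  smul_mem' := by
    intro c v hv i hi
    simp [Finsupp.smul_apply, hv i hi]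

/-- The group `GLB` of `F`-linear automorphisms `g` of `V` with `g(V_n) = V_n` for all
sufficiently large `n`. -/
def GLBgrp : Subgroup ((Vinf F) ≃ₗ[F] (Vinf F)) where
  carrier := {g | ∃ N : ℕ, ∀ n : ℕ, N ≤ n →
    Submodule.map (g : (Vinf F) →ₗ[F] (Vinf F)) (Vn F n) = Vn F n}
  one_mem' := by
    refine ⟨0, fun n _ => ?_⟩
    have h1 : ((1 : (Vinf F) ≃ₗ[F] (Vinf F)) : (Vinf F) →ₗ[F] (Vinf F)) = LinearMap.id := by
      ext x; rfl
    rw [h1, Submodule.map_id]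
  mul_mem' := by
    rintro g h ⟨Ng, hg⟩ ⟨Nh, hh⟩
    refine ⟨max Ng Nh, fun n hn => ?_⟩
    have h1 : ((g * h : (Vinf F) ≃ₗ[F] (Vinf F)) : (Vinf F) →ₗ[F] (Vinf F))
        = ((g : (Vinf F) →ₗ[F] (Vinf F)).comp (h : (Vinf F) →ₗ[F] (Vinf F))) := by
      ext x; rfl
    rw [h1, Submodule.map_comp, hh n (le_trans (le_max_right _ _) hn),
      hg n (le_trans (le_max_left _ _) hn)]
  inv_mem' := by
    rintro g ⟨N, hg⟩
    refine ⟨N, fun n hn => ?_⟩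
    conv_lhs => rw [← hg n hn]
    rw [← Submodule.map_comp]
    have h1 : ((g⁻¹ : (Vinf F) ≃ₗ[F] (Vinf F)) : (Vinf F) →ₗ[F] (Vinf F)).comp
        ((g : (Vinf F) →ₗ[F] (Vinf F))) = LinearMap.id := by
      have h0 : ((g⁻¹ * g : (Vinf F) ≃ₗ[F] (Vinf F)) : (Vinf F) →ₗ[F] (Vinf F))
          = ((g⁻¹ : (Vinf F) ≃ₗ[F] (Vinf F)) : (Vinf F) →ₗ[F] (Vinf F)).comp
            ((g : (Vinf F) →ₗ[F] (Vinf F))) := by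
        ext x; rfl
      rw [← h0, inv_mul_cancel]
      ext x; rfl
    rw [h1, Submodule.map_id]

/-- The Borel subgroup `B ⊆ GLB` of automorphisms with `g(V_n) = V_n` for all `n`. -/
def Bgrp : Subgroup ((Vinf F) ≃ₗ[F] (Vinf F)) where
  carrier := {g | ∀ n : ℕ,
    Submodule.map (g : (Vinf F) →ₗ[F] (Vinf F)) (Vn F n) = Vn F n}
  one_mem' := by
    intro n
    have h1 : ((1 : (Vinf F) ≃ₗ[F] (Vinf F)) : (Vinf F) →ₗ[F] (Vinf F)) = LinearMap.id := by
      ext x; rfl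
    rw [h1, Submodule.map_id]
  mul_mem' := by
    intro g h hg hh n
    have h1 : ((g * h : (Vinf F) ≃ₗ[F] (Vinf F)) : (Vinf F) →ₗ[F] (Vinf F))
        = ((g : (Vinf F) →ₗ[F] (Vinf F)).comp (h : (Vinf F) →ₗ[F] (Vinf F))) := by
      ext x; rfl
    rw [h1, Submodule.map_comp, hh n, hg n]
  inv_mem' := by
    intro g hg n
    conv_lhs => rw [← hg n]
    rw [← Submodule.map_comp]
    have h1 : ((g⁻¹ : (Vinf F) ≃ₗ[F] (Vinf F)) : (Vinf F) →ₗ[F] (Vinf F)).comp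
        ((g : (Vinf F) →ₗ[F] (Vinf F))) = LinearMap.id := by
      have h0 : ((g⁻¹ * g : (Vinf F) ≃ₗ[F] (Vinf F)) : (Vinf F) →ₗ[F] (Vinf F))
          = ((g⁻¹ : (Vinf F) ≃ₗ[F] (Vinf F)) : (Vinf F) →ₗ[F] (Vinf F)).comp
            ((g : (Vinf F) →ₗ[F] (Vinf F))) := by
        ext x; rfl
      rw [← h0, inv_mul_cancel]
      ext x; rfl
    rw [h1, Submodule.map_id]

/-- The Borel σ-algebra of `B` for the topology of pointwise convergence: the σ-algebra
generated by the evaluations `g ↦ g(e_i)` (with the finite set `V` discrete). -/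
noncomputable instance mB : MeasurableSpace ↥(Bgrp F) := by
  letI : MeasurableSpace (Vinf F) := ⊤
  exact MeasurableSpace.comap
    (fun g => fun i : ℕ => ((g : (Vinf F) ≃ₗ[F] (Vinf F)) (Finsupp.single i 1)))
    MeasurableSpace.pi

/-- The increment `Sym(X)_{k+1} = dim(X ∩ V_{k+1}) - dim(X ∩ V_k)` of the symbol of a
subspace `X ⊆ V` (0-based indexing: `symInc X k` is the `(k+1)`-st, 1-based, entry). -/
noncomputable def symInc (X : Submodule F (Vinf F)) (k : ℕ) : ℕ :=
  Module.finrank F ↥(X ⊓ Vn F (k + 1)) - Module.finrank F ↥(X ⊓ Vn F k)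

/-- The coordinate subspace `C(x) = span{e_i : x_i = 1}` of a 0–1 sequence `x`. -/
noncomputable def coordSpan (x : ℕ → Bool) : Submodule F (Vinf F) :=
  Submodule.span F ((fun i : ℕ => Finsupp.single i (1 : F)) '' {i : ℕ | x i = true})

/-- The map `φ : {0,1}^ℕ × B → Gr(V)`, `(x, g) ↦ g·C(x)`. -/
noncomputable def phiMap (p : (ℕ → Bool) × ↥(Bgrp F)) : Submodule F (Vinf F) :=
  Submodule.map ((p.2 : (Vinf F) ≃ₗ[F] (Vinf F)) : (Vinf F) →ₗ[F] (Vinf F)) (coordSpan F p.1)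

/-- The basic set `U^n(X,Y)` of the groupoid `Gr²(V)`: pairs `(Z,W)` of `GLB`-equivalent
subspaces with `Z ∩ V_n = X ∩ V_n`, `W ∩ V_n = Y ∩ V_n` and `dim(Z ∩ V_k) = dim(W ∩ V_k)`
for all `k ≥ n`. -/
def Upair (n : ℕ) (X Y : Submodule F (Vinf F)) :
    Set (Submodule F (Vinf F) × Submodule F (Vinf F)) :=
  {p | (∃ g ∈ GLBgrp F, Submodule.map (g : (Vinf F) →ₗ[F] (Vinf F)) p.1 = p.2) ∧
    p.1 ⊓ Vn F n = X ⊓ Vn F n ∧ p.2 ⊓ Vn F n = Y ⊓ Vn F n ∧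
    ∀ k : ℕ, n ≤ k → Module.finrank F ↥(p.1 ⊓ Vn F k) = Module.finrank F ↥(p.2 ⊓ Vn F k)}

/-- The σ-algebra of the groupoid `Gr²(V)`, generated by the sets `U^n(X,Y)`. -/
noncomputable instance mGr2 :
    MeasurableSpace (Submodule F (Vinf F) × Submodule F (Vinf F)) :=
  MeasurableSpace.generateFrom
    {A | ∃ (n : ℕ) (X Y : Submodule F (Vinf F)), A = Upair F n X Y}

/-- The set `T` of pairs of 0–1 sequences which eventually agree and whose initial segments
have matching numbers of ones. -/
def Tset : Set ((ℕ → Bool) × (ℕ → Bool)) :=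
  {p | ∃ N : ℕ, (∀ k : ℕ, N < k → p.1 k = p.2 k) ∧
    ((Finset.range (N + 1)).filter (fun k => p.1 k = true)).card
      = ((Finset.range (N + 1)).filter (fun k => p.2 k = true)).card}

/-- The basic subset `A(i₁,...,i_n; j₁,...,j_n)` of `T`. -/
def Aset (n : ℕ) (c d : Fin n → Bool) : Set ↥Tset :=
  {p | (∀ k : Fin n, p.1.1 (k : ℕ) = c k ∧ p.1.2 (k : ℕ) = d k) ∧
    ∀ k : ℕ, n ≤ k → p.1.1 k = p.1.2 k}

/-- The σ-algebra of `T`, generated by the sets `A(i₁,...,i_n; j₁,...,j_n)`. -/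
noncomputable instance mT : MeasurableSpace ↥Tset :=
  MeasurableSpace.generateFrom {S | ∃ (n : ℕ) (c d : Fin n → Bool), S = Aset n c d}

/-- The number of ones in a finite 0–1 sequence. -/
def trueCount {n : ℕ} (c : Fin n → Bool) : ℕ :=
  (Finset.univ.filter (fun k => c k = true)).card

/-- The map `ψ : T × B × B → Gr(V) × Gr(V)`, `ψ((x,y),g,h) = (g·C(x), h·C(y))`. -/
noncomputable def psiMap (w : ↥Tset × (↥(Bgrp F) × ↥(Bgrp F))) :
    Submodule F (Vinf F) × Submodule F (Vinf F) :=
  (Submodule.map ((w.2.1 : (Vinf F) ≃ₗ[F] (Vinf F)) : (Vinf F) →ₗ[F] (Vinf F))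
      (coordSpan F w.1.1.1),
   Submodule.map ((w.2.2 : (Vinf F) ≃ₗ[F] (Vinf F)) : (Vinf F) →ₗ[F] (Vinf F))
      (coordSpan F w.1.1.2))

section helpers

variable {F}


/-- The action of a linear automorphism on subspaces. -/
noncomputable abbrev act (g : (Vinf F) ≃ₗ[F] (Vinf F)) (X : Submodule F (Vinf F)) : Submodule F (Vinf F) :=
  Submodule.map (g : (Vinf F) →ₗ[F] (Vinf F)) X

lemma mem_Vn {n : ℕ} {v : Vinf F} : v ∈ Vn F n ↔ ∀ i : ℕ, n ≤ i → v i = 0 := Iff.rfl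

lemma Vn_mono {m n : ℕ} (h : m ≤ n) : Vn F m ≤ Vn F n := fun _ hv i hi => hv i (h.trans hi)

lemma Vn_zero : Vn F 0 = ⊥ := by
  rw [eq_bot_iff]
  intro v hv
  rw [Submodule.mem_bot]
  ext i
  exact hv i (Nat.zero_le i)

lemma mem_Vn_of_succ {n : ℕ} {v : Vinf F} (hv : v ∈ Vn F (n + 1)) (h0 : v n = 0) :
    v ∈ Vn F n := by
  intro i hi
  rcases Nat.eq_or_lt_of_le hi with h | h
  · rw [← h]; exact h0
  · exact hv i h

lemma Vn_finite [Finite F] (n : ℕ) : Finite ↥(Vn F n) := by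
  refine Finite.of_injective (fun v : ↥(Vn F n) => fun i : Fin n => (v : Vinf F) i) ?_
  intro v w h
  apply Subtype.ext
  ext i
  by_cases hi : i < n
  · exact congrFun h ⟨i, hi⟩
  · rw [v.2 i (not_lt.mp hi), w.2 i (not_lt.mp hi)]

instance inf_Vn_finite [Finite F] (X : Submodule F (Vinf F)) (n : ℕ) :
    Finite ↥(X ⊓ Vn F n) := by
  have := Vn_finite (F := F) n
  exact Finite.of_injective (Submodule.inclusion (inf_le_right : X ⊓ Vn F n ≤ Vn F n))
    (Submodule.inclusion_injective _)

/-- The dimension of `X ∩ V_n`. -/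
noncomputable abbrev dm (X : Submodule F (Vinf F)) (n : ℕ) : ℕ := Module.finrank F ↥(X ⊓ Vn F n)

lemma dm_zero (X : Submodule F (Vinf F)) : dm X 0 = 0 := by
  unfold dm
  rw [Vn_zero, inf_bot_eq]
  exact finrank_bot F _

/-- The last coordinate functional on `X ∩ V_{k+1}`. -/
noncomputable def lastC (X : Submodule F (Vinf F)) (k : ℕ) : ↥(X ⊓ Vn F (k + 1)) →ₗ[F] F :=
  (Finsupp.lapply k).comp (Submodule.subtype _)

lemma dm_succ [Finite F] (X : Submodule F (Vinf F)) (k : ℕ) :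
    dm X (k + 1) = Module.finrank F (LinearMap.range (lastC X k)) + dm X k := by
  have h := LinearMap.finrank_range_add_finrank_ker (K := F) (V := ↥(X ⊓ Vn F (k + 1))) (V₂ := F) (lastC X k)
  refine h.symm.trans ?_
  congr 1
  have h2 : Submodule.map (X ⊓ Vn F (k + 1)).subtype (LinearMap.ker (lastC X k))
      = X ⊓ Vn F k := by
    ext v
    constructor
    · rintro ⟨w, hw, rfl⟩
      exact ⟨w.2.1, mem_Vn_of_succ w.2.2 hw⟩
    · rintro ⟨h1, h2⟩
      exact ⟨⟨v, h1, Vn_mono (Nat.le_succ k) h2⟩, h2 k le_rfl, rfl⟩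
  unfold dm
  rw [← h2]
  exact (LinearEquiv.finrank_eq (Submodule.equivMapOfInjective _
    (Submodule.injective_subtype _) _))

lemma symInc_eq [Finite F] (X : Submodule F (Vinf F)) (k : ℕ) :
    symInc F X k = Module.finrank F (LinearMap.range (lastC X k)) := by
  have := dm_succ X k
  unfold symInc
  unfold dm at this
  omega

lemma dm_succ' [Finite F] (X : Submodule F (Vinf F)) (k : ℕ) :
    dm X (k + 1) = dm X k + symInc F X k := by
  rw [symInc_eq, dm_succ, add_comm]

lemma symInc_eq_one [Finite F] {X : Submodule F (Vinf F)} {k : ℕ} {v : Vinf F}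
    (hv : v ∈ X ⊓ Vn F (k + 1)) (hk : v k ≠ 0) : symInc F X k = 1 := by
  rw [symInc_eq]
  have : LinearMap.range (lastC X k) = ⊤ := by
    apply LinearMap.range_eq_top.mpr
    apply LinearMap.surjective
    intro h
    exact hk (congrArg (fun L => L ⟨v, hv⟩) h)
  rw [this, finrank_top, Module.finrank_self]

lemma symInc_eq_zero [Finite F] {X : Submodule F (Vinf F)} {k : ℕ}
    (hk : ∀ v ∈ X ⊓ Vn F (k + 1), v k = 0) : symInc F X k = 0 := by
  rw [symInc_eq]
  have : lastC X k = 0 := by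
    ext v
    exact hk v.1 v.2
  rw [this, LinearMap.range_zero, finrank_bot]

lemma symInc_cases [Finite F] (X : Submodule F (Vinf F)) (k : ℕ) :
    (symInc F X k = 1 ∧ ∃ v ∈ X ⊓ Vn F (k + 1), v k = 1) ∨
    (symInc F X k = 0 ∧ ∀ v ∈ X ⊓ Vn F (k + 1), v k = 0) := by
  by_cases h : ∃ v ∈ X ⊓ Vn F (k + 1), v k ≠ 0
  · obtain ⟨v, hv, hk⟩ := h
    refine Or.inl ⟨symInc_eq_one hv hk, (v k)⁻¹ • v, Submodule.smul_mem _ _ hv, ?_⟩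
    simp [hk]
  · push Not at h
    exact Or.inr ⟨symInc_eq_zero h, h⟩

lemma dm_eq_sum [Finite F] (X : Submodule F (Vinf F)) (n : ℕ) :
    dm X n = ∑ k ∈ Finset.range n, symInc F X k := by
  induction n with
  | zero => simp [dm_zero]
  | succ n ih => rw [dm_succ', ih, Finset.sum_range_succ]

lemma natCard_inf [Finite F] (X : Submodule F (Vinf F)) (n : ℕ) :
    Nat.card ↥(X ⊓ Vn F n) = Nat.card F ^ dm X n :=
  Module.natCard_eq_pow_finrank (K := F) (V := ↥(X ⊓ Vn F n))

lemma natCard_Vn [Finite F] (n : ℕ) : Nat.card ↥(Vn F n) = Nat.card F ^ n := by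
  have h := natCard_inf (⊤ : Submodule F (Vinf F)) n
  have h2 : dm (⊤ : Submodule F (Vinf F)) n = n := by
    rw [dm_eq_sum]
    rw [Finset.sum_congr rfl (g := fun _ => 1)]
    · simp
    · intro k _
      apply symInc_eq_one (v := Finsupp.single k 1)
      · refine ⟨trivial, fun i hi => ?_⟩
        rw [Finsupp.single_apply, if_neg (by omega)]
      · simp
  rw [h2, top_inf_eq] at h
  exact h

lemma symInc_congr {X Y : Submodule F (Vinf F)} {k : ℕ} (h : dm X k = dm Y k)
    (h' : dm X (k + 1) = dm Y (k + 1)) : symInc F X k = symInc F Y k := by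
  unfold symInc
  unfold dm at h h'
  rw [h, h']

lemma inf_Vn_of_le {X Y : Submodule F (Vinf F)} {m n : ℕ} (hmn : m ≤ n)
    (h : X ⊓ Vn F n = Y ⊓ Vn F n) : X ⊓ Vn F m = Y ⊓ Vn F m := by
  rw [← inf_eq_right.mpr (Vn_mono (F := F) hmn), ← inf_assoc, ← inf_assoc, h]

lemma dm_congr {X Y : Submodule F (Vinf F)} {m n : ℕ} (hmn : m ≤ n)
    (h : X ⊓ Vn F n = Y ⊓ Vn F n) : dm X m = dm Y m := by
  unfold dm
  rw [inf_Vn_of_le hmn h]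

lemma symInc_congr' {X Y : Submodule F (Vinf F)} {m n : ℕ} (hmn : m < n)
    (h : X ⊓ Vn F n = Y ⊓ Vn F n) : symInc F X m = symInc F Y m :=
  symInc_congr (dm_congr hmn.le h) (dm_congr hmn h)

lemma act_inf_Vn {g : (Vinf F) ≃ₗ[F] (Vinf F)} {n : ℕ} (hg : act g (Vn F n) = Vn F n)
    (X : Submodule F (Vinf F)) : act g X ⊓ Vn F n = act g (X ⊓ Vn F n) := by
  conv_lhs => rw [← hg]
  exact (Submodule.map_inf _ g.injective).symm

lemma dm_act {g : (Vinf F) ≃ₗ[F] (Vinf F)} {n : ℕ} (hg : act g (Vn F n) = Vn F n)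
    (X : Submodule F (Vinf F)) : dm (act g X) n = dm X n := by
  unfold dm
  rw [act_inf_Vn hg]
  exact LinearEquiv.finrank_map_eq g _

lemma symInc_act_B {g : (Vinf F) ≃ₗ[F] (Vinf F)} (hg : g ∈ Bgrp F)
    (X : Submodule F (Vinf F)) (k : ℕ) : symInc F (act g X) k = symInc F X k :=
  symInc_congr (dm_act (hg k) X) (dm_act (hg (k + 1)) X)

lemma act_mul (g h : (Vinf F) ≃ₗ[F] (Vinf F)) (X : Submodule F (Vinf F)) :
    act (g * h) X = act g (act h X) := by
  unfold act
  rw [← Submodule.map_comp]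
  rfl

lemma act_one (X : Submodule F (Vinf F)) : act 1 X = X := by
  ext v
  constructor
  · rintro ⟨w, hw, rfl⟩
    exact hw
  · intro hv
    exact ⟨v, hv, rfl⟩

lemma act_inv_act (g : (Vinf F) ≃ₗ[F] (Vinf F)) (X : Submodule F (Vinf F)) :
    act g⁻¹ (act g X) = X := by
  rw [← act_mul, inv_mul_cancel, act_one]

lemma act_act_inv (g : (Vinf F) ≃ₗ[F] (Vinf F)) (X : Submodule F (Vinf F)) :
    act g (act g⁻¹ X) = X := by
  rw [← act_mul, mul_inv_cancel, act_one]

lemma act_injective (g : (Vinf F) ≃ₗ[F] (Vinf F)) : Function.Injective (act g) :=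
  fun X Y h => by rw [← act_inv_act g X, h, act_inv_act]

lemma mem_coordSpan {x : ℕ → Bool} {v : Vinf F} :
    v ∈ coordSpan F x ↔ ∀ i, x i = false → v i = 0 := by
  unfold coordSpan
  rw [← Finsupp.supported_eq_span_single, Finsupp.mem_supported']
  simp

lemma symInc_coordSpan [Finite F] (x : ℕ → Bool) (k : ℕ) :
    symInc F (coordSpan F x) k = if x k = true then 1 else 0 := by
  split_ifs with h
  · apply symInc_eq_one (v := Finsupp.single k 1)
    · refine ⟨mem_coordSpan.mpr ?_, fun i hi => ?_⟩
      · intro i hi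
        rw [Finsupp.single_apply, if_neg]
        rintro rfl
        simp [h] at hi
      · rw [Finsupp.single_apply, if_neg (by omega)]
    · simp
  · apply symInc_eq_zero
    intro v hv
    exact mem_coordSpan.mp hv.1 k (by simpa using h)

/-- The transvection `v ↦ v + v_n w`. -/
noncomputable def trv (n : ℕ) (w : Vinf F) (hw : w ∈ Vn F n) : (Vinf F) ≃ₗ[F] (Vinf F) :=
  LinearEquiv.ofLinearMap
    (LinearMap.id + (LinearMap.toSpanSingleton F _ w).comp (Finsupp.lapply n))
    (LinearMap.id - (LinearMap.toSpanSingleton F _ w).comp (Finsupp.lapply n))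
    (by
      apply LinearMap.ext
      intro v
      have := hw n le_rfl
      simp [this])
    (by
      apply LinearMap.ext
      intro v
      have := hw n le_rfl
      simp [this])

lemma trv_apply (n : ℕ) (w : Vinf F) (hw : w ∈ Vn F n) (v : Vinf F) :
    trv n w hw v = v + v n • w := by
  simp [trv]

lemma trv_symm_apply (n : ℕ) (w : Vinf F) (hw : w ∈ Vn F n) (v : Vinf F) :
    (trv n w hw).symm v = v - v n • w := by
  simp [trv]

lemma trv_mem (n : ℕ) (w : Vinf F) (hw : w ∈ Vn F n) : trv n w hw ∈ Bgrp F := by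
  have key : ∀ (c : F) (m : ℕ) (v : Vinf F), v ∈ Vn F m → v + (c * v n) • w ∈ Vn F m := by
    intro c m v hv
    by_cases hm : m ≤ n
    · rw [hv n hm]; simpa using hv
    · exact Submodule.add_mem _ hv (Submodule.smul_mem _ _ (Vn_mono (by omega) hw))
  intro m
  apply le_antisymm
  · rintro _ ⟨v, hv, rfl⟩
    have := key 1 m v hv
    rw [one_mul] at this
    change trv n w hw v ∈ _
    rwa [trv_apply]
  · intro v hv
    refine ⟨(trv n w hw).symm v, ?_, (trv n w hw).apply_symm_apply v⟩
    rw [trv_symm_apply]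
    have := key (-1) m v hv
    simpa [sub_eq_add_neg] using this

lemma act_trv_inf (n : ℕ) (w : Vinf F) (hw : w ∈ Vn F n) (X : Submodule F (Vinf F)) :
    act (trv n w hw) X ⊓ Vn F n = X ⊓ Vn F n := by
  rw [act_inf_Vn (trv_mem n w hw n)]
  ext v
  constructor
  · rintro ⟨u, hu, rfl⟩
    change trv n w hw u ∈ _
    rw [trv_apply, hu.2 n le_rfl]
    simpa using hu
  · intro hv
    refine ⟨v, hv, ?_⟩
    change trv n w hw v = _
    rw [trv_apply, hv.2 n le_rfl]
    simp

/-- Comparing one-step extensions with the same trace on `V_n`. -/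
lemma ext_iff {P Q : Submodule F (Vinf F)} {n : ℕ} (h : P ⊓ Vn F n = Q ⊓ Vn F n)
    {p q : Vinf F} (hp : p ∈ P ⊓ Vn F (n + 1)) (hq : q ∈ Q ⊓ Vn F (n + 1))
    (hp1 : p n = 1) (hq1 : q n = 1) :
    P ⊓ Vn F (n + 1) = Q ⊓ Vn F (n + 1) ↔ p - q ∈ P ⊓ Vn F n := by
  have hmem : p - q ∈ Vn F n := mem_Vn_of_succ (Submodule.sub_mem _ hp.2 hq.2) (by simp [hp1, hq1])
  have key : ∀ {P Q : Submodule F (Vinf F)} (_ : P ⊓ Vn F n = Q ⊓ Vn F n)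
      {p q : Vinf F} (_ : p ∈ P ⊓ Vn F (n + 1)) (_ : q ∈ Q ⊓ Vn F (n + 1))
      (_ : p n = 1) (_ : q n = 1), p - q ∈ Q → P ⊓ Vn F (n + 1) ≤ Q ⊓ Vn F (n + 1) := by
    intro P Q h p q hp hq hp1 hq1 hpq v hv
    refine ⟨?_, hv.2⟩
    have hpQ : p ∈ Q := by simpa using Submodule.add_mem _ hpq hq.1
    have h1 : v - v n • p ∈ P ⊓ Vn F n :=
      ⟨Submodule.sub_mem _ hv.1 (Submodule.smul_mem _ _ hp.1),
        mem_Vn_of_succ (Submodule.sub_mem _ hv.2 (Submodule.smul_mem _ _ hp.2)) (by simp [hp1])⟩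
    rw [h] at h1
    simpa using Submodule.add_mem _ h1.1 (Submodule.smul_mem _ (v n) hpQ)
  constructor
  · intro he
    rw [← he] at hq
    exact ⟨Submodule.sub_mem _ hp.1 hq.1, hmem⟩
  · intro hpq
    apply le_antisymm
    · exact key h hp hq hp1 hq1 (by rw [h] at hpq; exact hpq.1)
    · apply key h.symm hq hp hq1 hp1
      rw [← neg_sub]
      exact Submodule.neg_mem _ hpq.1

lemma card_ext [Finite F] {X Y : Submodule F (Vinf F)} {n : ℕ} (h : Y ⊓ Vn F n = X ⊓ Vn F n)
    (hX : symInc F X n = 1) (hY : symInc F Y n = 1) :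
    Nat.card {w : ↥(Vn F n) // Y ⊓ Vn F (n + 1) = act (trv n w.1 w.2) X ⊓ Vn F (n + 1)}
      = Nat.card ↥(X ⊓ Vn F n) := by
  obtain ⟨z, hz, hz1⟩ : ∃ v ∈ X ⊓ Vn F (n + 1), v n = 1 := by
    rcases symInc_cases X n with h | h
    · exact h.2
    · omega
  obtain ⟨y, hy, hy1⟩ : ∃ v ∈ Y ⊓ Vn F (n + 1), v n = 1 := by
    rcases symInc_cases Y n with h | h
    · exact h.2
    · omega
  have hyz : y - z ∈ Vn F n := mem_Vn_of_succ (Submodule.sub_mem _ hy.2 hz.2) (by simp [hy1, hz1])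
  have key : ∀ w : ↥(Vn F n), (Y ⊓ Vn F (n + 1) = act (trv n w.1 w.2) X ⊓ Vn F (n + 1)) ↔
      y - z - w.1 ∈ X ⊓ Vn F n := by
    intro w
    have hzw : z + w.1 ∈ act (trv n w.1 w.2) X ⊓ Vn F (n + 1) := by
      refine ⟨⟨z, hz.1, ?_⟩, Submodule.add_mem _ hz.2 (Vn_mono (Nat.le_succ n) w.2)⟩
      change trv n w.1 w.2 z = _
      rw [trv_apply, hz1, one_smul]
    rw [ext_iff (by rw [act_trv_inf, h]) hy hzw hy1 (by simp [hz1, w.2 n le_rfl]), h]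
    rw [sub_sub]
  refine Nat.card_congr
    { toFun := fun w => ⟨y - z - w.1.1, (key w.1).mp w.2⟩
      invFun := fun u => ⟨⟨y - z - u.1, Submodule.sub_mem _ hyz u.2.2⟩,
        (key _).mpr (by simp)⟩
      left_inv := fun w => by ext; simp
      right_inv := fun u => by ext; simp }

end helpers

section helpers2

variable {F}


/-- The event that `a·C(x)` has the same trace on `V_n` as `X`. -/
def Ev (n : ℕ) (x : ℕ → Bool) (X : Submodule F (Vinf F)) : Set ↥(Bgrp F) :=
  {a | act (a : (Vinf F) ≃ₗ[F] (Vinf F)) (coordSpan F x) ⊓ Vn F n = X ⊓ Vn F n}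

lemma act_inf_le_of_basis {a b : ↥(Bgrp F)} {n : ℕ}
    (h : ∀ i : Fin n, (a : (Vinf F) ≃ₗ[F] (Vinf F)) (Finsupp.single (i : ℕ) 1)
      = (b : (Vinf F) ≃ₗ[F] (Vinf F)) (Finsupp.single (i : ℕ) 1))
    (X : Submodule F (Vinf F)) :
    act (a : (Vinf F) ≃ₗ[F] (Vinf F)) X ⊓ Vn F n
      = act (b : (Vinf F) ≃ₗ[F] (Vinf F)) X ⊓ Vn F n := by
  have key : ∀ v ∈ Vn F n, (a : (Vinf F) ≃ₗ[F] (Vinf F)) v = (b : (Vinf F) ≃ₗ[F] (Vinf F)) v := by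
    intro v hv
    have hsum : v = v.sum (fun i c => c • Finsupp.single i (1 : F)) := by
      conv_lhs => rw [← Finsupp.sum_single v]
      simp
    rw [hsum, map_finsuppSum, map_finsuppSum]
    apply Finsupp.sum_congr
    intro i hi
    rw [map_smul, map_smul]
    have hin : i < n := by
      by_contra hcon
      exact (Finsupp.mem_support_iff.mp hi) (hv i (not_lt.mp hcon))
    rw [h ⟨i, hin⟩]
  rw [act_inf_Vn (a.2 n), act_inf_Vn (b.2 n)]
  ext v
  constructor
  · rintro ⟨u, hu, rfl⟩
    exact ⟨u, hu, (key u hu.2).symm⟩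
  · rintro ⟨u, hu, rfl⟩
    exact ⟨u, hu, key u hu.2⟩

lemma measurableSet_Ev [Finite F] (n : ℕ) (x : ℕ → Bool) (X : Submodule F (Vinf F)) :
    MeasurableSet (Ev n x X) := by
  let mV : MeasurableSpace (Vinf F) := ⊤
  have : DiscreteMeasurableSpace (Vinf F) := ⟨fun _ => trivial⟩
  let e : ↥(Bgrp F) → (ℕ → Vinf F) :=
    fun g => fun i : ℕ => ((g : (Vinf F) ≃ₗ[F] (Vinf F)) (Finsupp.single i 1))
  have he : Measurable e := fun s hs => ⟨s, hs, rfl⟩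
  let r : (ℕ → Vinf F) → (Fin n → Vinf F) := fun f i => f i
  have hr : Measurable r := measurable_pi_lambda _ (fun i => measurable_pi_apply _)
  have hset : Ev n x X = (r ∘ e) ⁻¹' ((r ∘ e) '' Ev n x X) := by
    apply Set.Subset.antisymm (Set.subset_preimage_image _ _)
    rintro b ⟨a, ha, hab⟩
    have := act_inf_le_of_basis (a := a) (b := b) (n := n) (fun i => congrFun hab i)
      (coordSpan F x)
    change _ = _
    rw [← this]
    exact ha
  rw [hset]
  have : Countable (Vinf F) := inferInstance
  exact (hr.comp he) (MeasurableSet.of_discrete)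

lemma mu_Ev [Finite F] (μB : Measure ↥(Bgrp F)) (hprob : IsProbabilityMeasure μB)
    (hinv : ∀ (b : ↥(Bgrp F)) (S : Set ↥(Bgrp F)), MeasurableSet S →
      μB ((fun x => b * x) ⁻¹' S) = μB S) (n : ℕ) (x : ℕ → Bool) (X : Submodule F (Vinf F))
    (hx : ∀ k < n, symInc F X k = if x k = true then 1 else 0) :
    μB (Ev n x X) * (Nat.card F : ENNReal) ^ (∑ k ∈ Finset.range n, (k + 1) * symInc F X k)
      = (Nat.card F : ENNReal) ^ (∑ i ∈ Finset.range (dm X n), (i + 1)) := by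
  induction n with
  | zero =>
    have : Ev 0 x X = Set.univ := by
      ext a
      simp [Ev, Vn_zero]
    rw [this, dm_zero]
    simp
  | succ n ih =>
    have ih := ih (fun k hk => hx k (Nat.lt_succ_of_lt hk))
    have hxn := hx n (Nat.lt_succ_self n)
    have hsa : ∀ a : ↥(Bgrp F), symInc F (act (a : (Vinf F) ≃ₗ[F] (Vinf F)) (coordSpan F x)) n
        = symInc F X n := by
      intro a
      rw [symInc_act_B a.2, symInc_coordSpan, hxn]
    rw [dm_succ', Finset.sum_range_succ]
    rcases symInc_cases X n with ⟨h1, -⟩ | ⟨h0, -⟩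
    · rw [h1] at hsa ⊢
      rw [mul_one, Finset.sum_range_succ]
      have := Vn_finite (F := F) n
      have : Fintype ↥(Vn F n) := Fintype.ofFinite _
      have hEw : ∀ w : ↥(Vn F n), μB (Ev (n + 1) x (act (trv n w.1 w.2) X))
          = μB (Ev (n + 1) x X) := by
        intro w
        let b : ↥(Bgrp F) := ⟨trv n w.1 w.2, trv_mem n w.1 w.2⟩
        rw [← hinv b _ (measurableSet_Ev (n + 1) x (act (trv n w.1 w.2) X))]
        congr 1
        ext a
        change act ((b : (Vinf F) ≃ₗ[F] (Vinf F)) * (a : (Vinf F) ≃ₗ[F] (Vinf F)))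
          (coordSpan F x) ⊓ _ = act (b : (Vinf F) ≃ₗ[F] (Vinf F)) X ⊓ _ ↔ _
        rw [act_mul, act_inf_Vn (b.2 (n + 1)), act_inf_Vn (b.2 (n + 1))]
        exact (act_injective _).eq_iff
      have hcount : (Nat.card F : ENNReal) ^ n * μB (Ev (n + 1) x X)
          = (Nat.card F : ENNReal) ^ (dm X n) * μB (Ev n x X) := by
        have hl : ∑ w : ↥(Vn F n), μB (Ev (n + 1) x (act (trv n w.1 w.2) X))
            = (Nat.card F : ENNReal) ^ n * μB (Ev (n + 1) x X) := by
          rw [Finset.sum_congr rfl (fun w _ => hEw w), Finset.sum_const, Finset.card_univ,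
            ← Nat.card_eq_fintype_card, natCard_Vn, nsmul_eq_mul, Nat.cast_pow]
        rw [← hl]
        classical
        have hpt : ∀ a : ↥(Bgrp F), ∑ w : ↥(Vn F n),
            (Ev (n + 1) x (act (trv n w.1 w.2) X)).indicator (fun _ => (1 : ENNReal)) a
            = (Ev n x X).indicator (fun _ => (Nat.card F : ENNReal) ^ (dm X n)) a := by
          intro a
          by_cases ha : a ∈ Ev n x X
          · rw [Set.indicator_of_mem ha]
            have hc := card_ext (X := X) ha h1 (hsa a)
            rw [natCard_inf, Nat.card_eq_fintype_card, Fintype.card_subtype] at hc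
            simp only [Set.indicator_apply]
            rw [Finset.sum_ite, Finset.sum_const_zero, add_zero, Finset.sum_const, nsmul_eq_mul,
              mul_one, ← Nat.cast_pow, ← hc]
            rfl
          · rw [Set.indicator_of_notMem ha]
            apply Finset.sum_eq_zero
            intro w _
            apply Set.indicator_of_notMem
            intro haw
            apply ha
            have := inf_Vn_of_le (Nat.le_succ n) haw
            rw [act_trv_inf] at this
            exact this
        calc ∑ w : ↥(Vn F n), μB (Ev (n + 1) x (act (trv n w.1 w.2) X))
            = ∑ w : ↥(Vn F n), ∫⁻ a,
              (Ev (n + 1) x (act (trv n w.1 w.2) X)).indicator (fun _ => (1 : ENNReal)) a ∂μB := by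
              refine Finset.sum_congr rfl (fun w _ => ?_)
              rw [lintegral_indicator_const (measurableSet_Ev _ _ _), one_mul]
          _ = ∫⁻ a, ∑ w : ↥(Vn F n),
              (Ev (n + 1) x (act (trv n w.1 w.2) X)).indicator (fun _ => (1 : ENNReal)) a ∂μB := by
              rw [lintegral_finsetSum]
              intro w _
              exact measurable_const.indicator (measurableSet_Ev _ _ _)
          _ = _ := by
              simp_rw [hpt]
              rw [lintegral_indicator_const (measurableSet_Ev _ _ _)]
      calc μB (Ev (n + 1) x X) * (Nat.card F : ENNReal) ^
            (∑ k ∈ Finset.range n, (k + 1) * symInc F X k + (n + 1))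
          = ((Nat.card F : ENNReal) ^ n * μB (Ev (n + 1) x X)) * (Nat.card F : ENNReal) ^
            (∑ k ∈ Finset.range n, (k + 1) * symInc F X k) * Nat.card F := by
            rw [pow_add, pow_add, pow_one]; ring
        _ = (μB (Ev n x X) * (Nat.card F : ENNReal) ^
            (∑ k ∈ Finset.range n, (k + 1) * symInc F X k)) *
              (Nat.card F : ENNReal) ^ (dm X n + 1) := by
            rw [hcount, pow_succ]; ring
        _ = _ := by rw [ih, ← pow_add]
    · rw [h0] at hsa ⊢
      rw [mul_zero, add_zero, add_zero, ← ih]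
      congr 2
      have hEq : ∀ Y : Submodule F (Vinf F), symInc F Y n = 0 →
          Y ⊓ Vn F (n + 1) = Y ⊓ Vn F n := by
        intro Y hY
        rcases symInc_cases Y n with ⟨h1, -⟩ | ⟨-, h⟩
        · omega
        · apply le_antisymm
          · intro v hv
            exact ⟨hv.1, mem_Vn_of_succ hv.2 (h v hv)⟩
          · exact inf_le_inf_left _ (Vn_mono (Nat.le_succ n))
      ext a
      change _ = _ ↔ _ = _
      rw [hEq X h0, hEq _ (hsa a)]

/-- Membership in the groupoid. -/
def Grel (p : Submodule F (Vinf F) × Submodule F (Vinf F)) : Prop :=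
  ∃ g ∈ GLBgrp F, act g p.1 = p.2

lemma B_le_GLB : Bgrp F ≤ GLBgrp F := fun _ hg => ⟨0, fun n _ => hg n⟩

lemma exists_perm {x y : ℕ → Bool} {N : ℕ} (h : ∀ k : ℕ, N < k → x k = y k)
    (hc : ((Finset.range (N + 1)).filter (fun k => x k = true)).card
      = ((Finset.range (N + 1)).filter (fun k => y k = true)).card) :
    ∃ σ : Equiv.Perm ℕ, (∀ k, y (σ k) = x k) ∧ ∀ k, N < k → σ k = k := by
  classical
  have hfin : Finite {k : ℕ // k < N + 1} := (Set.finite_lt_nat (N + 1)).to_subtype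
  let _ : Fintype {k : ℕ // k < N + 1} := Fintype.ofFinite _
  let P : {k : ℕ // k < N + 1} → Prop := fun k => x k = true
  let Q : {k : ℕ // k < N + 1} → Prop := fun k => y k = true
  have hcard : ∀ z : ℕ → Bool, Fintype.card {k : {k : ℕ // k < N + 1} // z k = true}
      = ((Finset.range (N + 1)).filter (fun k => z k = true)).card := by
    intro z
    rw [Fintype.card_subtype]
    refine Finset.card_bij (fun k _ => (k : ℕ)) ?_ ?_ ?_
    · intro k hk
      simp only [Finset.mem_filter, Finset.mem_univ, true_and] at hk
      simp [hk, k.2]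
    · intro a _ b _ hab
      exact Subtype.ext hab
    · intro b hb
      simp only [Finset.mem_filter, Finset.mem_range] at hb
      exact ⟨⟨b, hb.1⟩, by simp [hb.2], rfl⟩
  let e : {k // P k} ≃ {k // Q k} := Fintype.equivOfCardEq
    ((hcard x).trans (hc.trans (hcard y).symm))
  let τ : Equiv.Perm {k : ℕ // k < N + 1} := e.extendSubtype
  have hτ : ∀ k : {k : ℕ // k < N + 1}, y (τ k) = x k := by
    intro k
    by_cases hk : P k
    · have h1 : Q (τ k) := Equiv.extendSubtype_mem e k hk
      exact h1.trans (Eq.symm hk)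
    · have h1 : ¬ Q (τ k) := Equiv.extendSubtype_not_mem e k hk
      have h2 : y (τ k) = false := by simpa [Q] using h1
      have h3 : x k = false := by simpa [P] using hk
      rw [h2, h3]
  refine ⟨Equiv.Perm.ofSubtype τ, ?_, ?_⟩
  · intro k
    by_cases hk : k < N + 1
    · rw [Equiv.Perm.ofSubtype_apply_of_mem τ hk]
      exact hτ ⟨k, hk⟩
    · rw [Equiv.Perm.ofSubtype_apply_of_not_mem τ hk]
      exact (h k (by omega)).symm
  · intro k hk
    exact Equiv.Perm.ofSubtype_apply_of_not_mem τ (by omega)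

lemma exists_GLB_coordSpan {x y : ℕ → Bool} (hxy : (x, y) ∈ Tset) :
    ∃ g ∈ GLBgrp F, act g (coordSpan F x) = coordSpan F y := by
  obtain ⟨N, h, hc⟩ := hxy
  dsimp only at h hc
  obtain ⟨σ, hσ, hσN⟩ := exists_perm h hc
  have hσN' : ∀ k, N < k → σ.symm k = k := fun k hk => by
    rw [Equiv.symm_apply_eq, hσN k hk]
  have hlt : ∀ k, k ≤ N → σ k ≤ N := by
    intro k hk
    by_contra hcon
    have h1 := hσN (σ k) (not_le.mp hcon)
    have := σ.injective h1
    omega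
  have happ : ∀ (v : Vinf F) (i : ℕ), Finsupp.domLCongr (R := F) σ v i = v (σ.symm i) := by
    intro v i
    simp [Finsupp.domLCongr, Finsupp.domCongr, Finsupp.equivMapDomain]
  refine ⟨Finsupp.domLCongr σ, ⟨N + 1, fun n hn => ?_⟩, ?_⟩
  · ext v
    constructor
    · rintro ⟨u, hu, rfl⟩
      intro i hi
      change Finsupp.domLCongr (R := F) σ u i = 0
      rw [happ, hσN' i (by omega)]
      exact hu i hi
    · intro hv
      refine ⟨(Finsupp.domLCongr (R := F) σ).symm v, ?_, LinearEquiv.apply_symm_apply _ _⟩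
      intro i hi
      have := happ ((Finsupp.domLCongr (R := F) σ).symm v) (σ i)
      rw [LinearEquiv.apply_symm_apply, Equiv.symm_apply_apply] at this
      rw [← this, hσN i (by omega)]
      exact hv i hi
  · ext v
    constructor
    · rintro ⟨u, hu, rfl⟩
      rw [mem_coordSpan]
      intro i hi
      change Finsupp.domLCongr (R := F) σ u i = 0
      rw [happ]
      apply mem_coordSpan.mp hu
      rw [← hσ, Equiv.apply_symm_apply]
      exact hi
    · intro hv
      refine ⟨(Finsupp.domLCongr (R := F) σ).symm v, ?_, LinearEquiv.apply_symm_apply _ _⟩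
      apply mem_coordSpan.mpr
      intro i hi
      have := happ ((Finsupp.domLCongr (R := F) σ).symm v) (σ i)
      rw [LinearEquiv.apply_symm_apply, Equiv.symm_apply_apply] at this
      rw [← this]
      apply mem_coordSpan.mp hv
      rw [hσ, hi]

lemma Grel_psi (w : ↥Tset × (↥(Bgrp F) × ↥(Bgrp F))) : Grel (psiMap F w) := by
  obtain ⟨⟨⟨x, y⟩, hxy⟩, a, b⟩ := w
  obtain ⟨g, hg, hgx⟩ := exists_GLB_coordSpan (F := F) hxy
  refine ⟨b * g * (a : (Vinf F) ≃ₗ[F] (Vinf F))⁻¹,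
    mul_mem (mul_mem (B_le_GLB b.2) hg) (inv_mem (B_le_GLB a.2)), ?_⟩
  change act _ (act (a : (Vinf F) ≃ₗ[F] (Vinf F)) (coordSpan F x))
    = act (b : (Vinf F) ≃ₗ[F] (Vinf F)) (coordSpan F y)
  rw [act_mul, act_inv_act, act_mul, hgx]

end helpers2

section helpers3

variable {F}


lemma Upair_congr {n : ℕ} {X Y X' Y' : Submodule F (Vinf F)} (hX : X ⊓ Vn F n = X' ⊓ Vn F n)
    (hY : Y ⊓ Vn F n = Y' ⊓ Vn F n) : Upair F n X Y = Upair F n X' Y' := by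
  unfold Upair
  rw [hX, hY]

/-- A nonempty basic set is the basic set of any of its points. -/
lemma Upair_eq_of_mem {n : ℕ} {X Y : Submodule F (Vinf F)}
    {p : Submodule F (Vinf F) × Submodule F (Vinf F)} (hp : p ∈ Upair F n X Y) :
    Upair F n X Y = Upair F n p.1 p.2 :=
  Upair_congr hp.2.1.symm hp.2.2.1.symm

lemma mem_self_of_mem {n : ℕ} {X Y : Submodule F (Vinf F)}
    {p : Submodule F (Vinf F) × Submodule F (Vinf F)} (hp : p ∈ Upair F n X Y) :
    p ∈ Upair F n p.1 p.2 := by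
  rw [← Upair_eq_of_mem hp]; exact hp

lemma mem_self_mono {m n : ℕ} (hmn : m ≤ n)
    {p : Submodule F (Vinf F) × Submodule F (Vinf F)} (hp : p ∈ Upair F m p.1 p.2) :
    p ∈ Upair F n p.1 p.2 :=
  ⟨hp.1, rfl, rfl, fun k hk => hp.2.2.2 k (hmn.trans hk)⟩

lemma Upair_inter_of_le {m n : ℕ} (hmn : m ≤ n)
    {p : Submodule F (Vinf F) × Submodule F (Vinf F)} (hp : p ∈ Upair F m p.1 p.2) :
    Upair F m p.1 p.2 ∩ Upair F n p.1 p.2 = Upair F n p.1 p.2 := by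
  apply Set.inter_eq_right.mpr
  rintro r ⟨h1, h2, h3, h4⟩
  refine ⟨h1, inf_Vn_of_le hmn h2, inf_Vn_of_le hmn h3, fun k hk => ?_⟩
  by_cases hkn : n ≤ k
  · exact h4 k hkn
  · have e1 := dm_congr (not_le.mp hkn).le h2
    have e2 := dm_congr (not_le.mp hkn).le h3
    have e3 := hp.2.2.2 k hk
    exact e1.trans (e3.trans e2.symm)

lemma Upair_inter {m n : ℕ} {X Y X' Y' : Submodule F (Vinf F)}
    {p : Submodule F (Vinf F) × Submodule F (Vinf F)}
    (hp : p ∈ Upair F m X Y ∩ Upair F n X' Y') :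
    Upair F m X Y ∩ Upair F n X' Y' = Upair F (max m n) p.1 p.2 := by
  rw [Upair_eq_of_mem hp.1, Upair_eq_of_mem hp.2]
  rcases le_total m n with h | h
  · rw [max_eq_right h, Upair_inter_of_le h (mem_self_of_mem hp.1)]
  · rw [max_eq_left h, Set.inter_comm, Upair_inter_of_le h (mem_self_of_mem hp.2)]

lemma isPiSystem_Upair : IsPiSystem {A | ∃ (n : ℕ) (X Y : Submodule F (Vinf F)),
    A = Upair F n X Y} := by
  rintro _ ⟨m, X, Y, rfl⟩ _ ⟨n, X', Y', rfl⟩ ⟨p, hp⟩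
  exact ⟨_, _, _, Upair_inter hp⟩

lemma measurableSet_Upair (n : ℕ) (X Y : Submodule F (Vinf F)) :
    MeasurableSet (Upair F n X Y) :=
  MeasurableSpace.measurableSet_generateFrom ⟨n, X, Y, rfl⟩

lemma finite_le_Vn [Finite F] (n : ℕ) : {X : Submodule F (Vinf F) | X ≤ Vn F n}.Finite := by
  have hf : ((Vn F n : Submodule F (Vinf F)) : Set (Vinf F)).Finite := by
    have := Vn_finite (F := F) n
    exact Set.toFinite _
  refine Set.Finite.of_finite_image (f := fun X : Submodule F (Vinf F) => (X : Set (Vinf F)))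
    (hf.finite_subsets.subset ?_) (SetLike.coe_injective.injOn)
  rintro _ ⟨X, hX, rfl⟩
  exact hX

/-- The countable family of basic sets of level at least `N`. -/
def cov (F : Type) [Field F] (N : ℕ) : Set (Set (Submodule F (Vinf F) × Submodule F (Vinf F))) :=
  {A | ∃ n ≥ N, ∃ X Y : Submodule F (Vinf F), A = Upair F n X Y}

lemma cov_countable [Finite F] (N : ℕ) : (cov F N).Countable := by
  have : cov F N ⊆ ⋃ n : ℕ, (fun q : Submodule F (Vinf F) × Submodule F (Vinf F) =>
      Upair F n q.1 q.2) '' ({X | X ≤ Vn F n} ×ˢ {X | X ≤ Vn F n}) := by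
    rintro _ ⟨n, _, X, Y, rfl⟩
    refine Set.mem_iUnion.mpr ⟨n, (X ⊓ Vn F n, Y ⊓ Vn F n), ?_, ?_⟩
    · exact ⟨(inf_le_right : X ⊓ Vn F n ≤ Vn F n), (inf_le_right : Y ⊓ Vn F n ≤ Vn F n)⟩
    exact Upair_congr (by rw [inf_assoc, inf_idem]) (by rw [inf_assoc, inf_idem])
  refine Set.Countable.mono this (Set.countable_iUnion fun n => ?_)
  exact (((finite_le_Vn n).prod (finite_le_Vn n)).image _).countable

lemma Grel_mem_Upair (N : ℕ) {p : Submodule F (Vinf F) × Submodule F (Vinf F)} (hp : Grel p) :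
    ∃ n ≥ N, p ∈ Upair F n p.1 p.2 := by
  obtain ⟨g, hg, hgp⟩ := hp
  obtain ⟨M, hM⟩ := id hg
  refine ⟨max N M, le_max_left _ _, ⟨g, hg, hgp⟩, rfl, rfl, fun k hk => ?_⟩
  rw [← hgp]
  exact (dm_act (hM k ((le_max_right _ _).trans hk)) p.1).symm

lemma sUnion_cov (N : ℕ) : ⋃₀ cov F N = {p | Grel p} := by
  ext p
  constructor
  · rintro ⟨_, ⟨n, _, X, Y, rfl⟩, hp⟩
    exact hp.1
  · intro hp
    obtain ⟨n, hn, h⟩ := Grel_mem_Upair N hp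
    exact ⟨_, ⟨n, hn, _, _, rfl⟩, h⟩

lemma measurableSet_Grel [Finite F] :
    MeasurableSet {p : Submodule F (Vinf F) × Submodule F (Vinf F) | Grel p} := by
  rw [← sUnion_cov 0]
  refine MeasurableSet.sUnion (cov_countable 0) ?_
  rintro _ ⟨n, _, X, Y, rfl⟩
  exact measurableSet_Upair n X Y

/-- The componentwise action. -/
noncomputable def act2 (g h : (Vinf F) ≃ₗ[F] (Vinf F))
    (p : Submodule F (Vinf F) × Submodule F (Vinf F)) :
    Submodule F (Vinf F) × Submodule F (Vinf F) := (act g p.1, act h p.2)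

lemma act2_inv_act2 (g h : (Vinf F) ≃ₗ[F] (Vinf F))
    (p : Submodule F (Vinf F) × Submodule F (Vinf F)) : act2 g⁻¹ h⁻¹ (act2 g h p) = p := by
  simp only [act2, act_inv_act]

lemma act2_act2_inv (g h : (Vinf F) ≃ₗ[F] (Vinf F))
    (p : Submodule F (Vinf F) × Submodule F (Vinf F)) : act2 g h (act2 g⁻¹ h⁻¹ p) = p := by
  simp only [act2, act_act_inv]

lemma act2_image (g h : (Vinf F) ≃ₗ[F] (Vinf F))
    (A : Set (Submodule F (Vinf F) × Submodule F (Vinf F))) :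
    act2 g h '' A = act2 g⁻¹ h⁻¹ ⁻¹' A := by
  ext p
  constructor
  · rintro ⟨r, hr, rfl⟩
    rw [Set.mem_preimage, act2_inv_act2]; exact hr
  · intro hp
    exact ⟨_, hp, act2_act2_inv g h p⟩

/-- `g` preserves `V_n` for `n ≥ N`. -/
def StabFrom (g : (Vinf F) ≃ₗ[F] (Vinf F)) (N : ℕ) : Prop := ∀ n, N ≤ n → act g (Vn F n) = Vn F n

lemma act_inf_eq_iff {g : (Vinf F) ≃ₗ[F] (Vinf F)} {n : ℕ} (hg : act g (Vn F n) = Vn F n)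
    (X Y : Submodule F (Vinf F)) :
    act g X ⊓ Vn F n = act g Y ⊓ Vn F n ↔ X ⊓ Vn F n = Y ⊓ Vn F n := by
  rw [act_inf_Vn hg, act_inf_Vn hg]
  exact (act_injective g).eq_iff

lemma Grel_act2 {g h : (Vinf F) ≃ₗ[F] (Vinf F)} (hg : g ∈ GLBgrp F) (hh : h ∈ GLBgrp F)
    {p : Submodule F (Vinf F) × Submodule F (Vinf F)} (hp : Grel p) : Grel (act2 g h p) := by
  obtain ⟨u, hu, hup⟩ := hp
  refine ⟨h * u * g⁻¹, mul_mem (mul_mem hh hu) (inv_mem hg), ?_⟩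
  change act (h * u * g⁻¹) (act g p.1) = act h p.2
  rw [act_mul, act_inv_act, act_mul, hup]

lemma Grel_act2_iff {g h : (Vinf F) ≃ₗ[F] (Vinf F)} (hg : g ∈ GLBgrp F) (hh : h ∈ GLBgrp F)
    {p : Submodule F (Vinf F) × Submodule F (Vinf F)} : Grel (act2 g h p) ↔ Grel p := by
  refine ⟨fun hp => ?_, Grel_act2 hg hh⟩
  have := Grel_act2 (inv_mem hg) (inv_mem hh) hp
  rwa [act2_inv_act2] at this

lemma mem_Upair_act2 {g h : (Vinf F) ≃ₗ[F] (Vinf F)} (hg : g ∈ GLBgrp F) (hh : h ∈ GLBgrp F)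
    {N n : ℕ} (hgN : StabFrom g N) (hhN : StabFrom h N) (hn : N ≤ n)
    (X Y : Submodule F (Vinf F)) (p : Submodule F (Vinf F) × Submodule F (Vinf F)) :
    act2 g h p ∈ Upair F n (act g X) (act h Y) ↔ p ∈ Upair F n X Y := by
  have h1 : Grel (act2 g h p) ↔ Grel p := Grel_act2_iff hg hh
  have h2 := act_inf_eq_iff (hgN n hn) p.1 X
  have h3 := act_inf_eq_iff (hhN n hn) p.2 Y
  have h4 : (∀ k : ℕ, n ≤ k → dm (act g p.1) k = dm (act h p.2) k) ↔
      ∀ k : ℕ, n ≤ k → dm p.1 k = dm p.2 k := by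
    refine forall_congr' fun k => forall_congr' fun hk => ?_
    rw [dm_act (hgN k (hn.trans hk)), dm_act (hhN k (hn.trans hk))]
  exact and_congr h1 (and_congr h2 (and_congr h3 h4))

lemma image_Upair {g h : (Vinf F) ≃ₗ[F] (Vinf F)} (hg : g ∈ GLBgrp F) (hh : h ∈ GLBgrp F)
    {N n : ℕ} (hgN : StabFrom g N) (hhN : StabFrom h N) (hn : N ≤ n)
    (X Y : Submodule F (Vinf F)) :
    act2 g h '' Upair F n X Y = Upair F n (act g X) (act h Y) := by
  ext p
  constructor
  · rintro ⟨r, hr, rfl⟩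
    exact (mem_Upair_act2 hg hh hgN hhN hn X Y r).mpr hr
  · intro hp
    refine ⟨act2 g⁻¹ h⁻¹ p, ?_, act2_act2_inv g h p⟩
    rw [← mem_Upair_act2 hg hh hgN hhN hn X Y, act2_act2_inv]
    exact hp

lemma Upair_inter_cov {N n : ℕ} {X Y : Submodule F (Vinf F)}
    {t : Set (Submodule F (Vinf F) × Submodule F (Vinf F))} (ht : t ∈ cov F N) :
    Upair F n X Y ∩ t = ∅ ∨ ∃ m ≥ N, ∃ p : Submodule F (Vinf F) × Submodule F (Vinf F),
      p ∈ Upair F m p.1 p.2 ∧ Upair F n X Y ∩ t = Upair F m p.1 p.2 := by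
  obtain ⟨m, hm, X', Y', rfl⟩ := ht
  rcases Set.eq_empty_or_nonempty (Upair F n X Y ∩ Upair F m X' Y') with h | ⟨p, hp⟩
  · exact Or.inl h
  · exact Or.inr ⟨max n m, le_max_of_le_right hm, p,
      mem_self_mono (le_max_left _ _) (mem_self_of_mem hp.1), Upair_inter hp⟩

lemma exists_stab {g h : (Vinf F) ≃ₗ[F] (Vinf F)} (hg : g ∈ GLBgrp F) (hh : h ∈ GLBgrp F) :
    ∃ N, StabFrom g N ∧ StabFrom h N := by
  obtain ⟨M, hM⟩ := hg
  obtain ⟨M', hM'⟩ := hh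
  exact ⟨max M M', fun n hn => hM n ((le_max_left _ _).trans hn),
    fun n hn => hM' n ((le_max_right _ _).trans hn)⟩

lemma measurable_act2_inv [Finite F] {g h : (Vinf F) ≃ₗ[F] (Vinf F)} (hg : g ∈ GLBgrp F)
    (hh : h ∈ GLBgrp F) : Measurable (act2 g⁻¹ h⁻¹) := by
  obtain ⟨N, hgN, hhN⟩ := exists_stab hg hh
  apply measurable_generateFrom
  rintro _ ⟨n, X, Y, rfl⟩
  have : Upair F n X Y = ⋃ t ∈ cov F N, Upair F n X Y ∩ t := by
    rw [← Set.inter_iUnion₂, ← Set.sUnion_eq_biUnion, sUnion_cov]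
    exact (Set.inter_eq_left.mpr (fun p hp => hp.1)).symm
  rw [this, ← act2_image, Set.image_iUnion₂]
  refine MeasurableSet.biUnion (cov_countable N) fun t ht => ?_
  rcases Upair_inter_cov (n := n) (X := X) (Y := Y) ht with h0 | ⟨m, hm, p, -, hp⟩
  · rw [h0, Set.image_empty]; exact MeasurableSet.empty
  · rw [hp, image_Upair hg hh hgN hhN hm]
    exact measurableSet_Upair _ _ _

/-- The finite 0–1 sequence of the symbol of `X`. -/
noncomputable def symb (X : Submodule F (Vinf F)) (n : ℕ) : Fin n → Bool :=
  fun k => decide (symInc F X k = 1)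

lemma trueCount_symb [Finite F] (X : Submodule F (Vinf F)) (n : ℕ) :
    trueCount (symb X n) = dm X n := by
  rw [dm_eq_sum, ← Fin.sum_univ_eq_sum_range]
  unfold trueCount symb
  rw [Finset.card_filter]
  refine Finset.sum_congr rfl fun k _ => ?_
  rcases symInc_cases X k with ⟨h, -⟩ | ⟨h, -⟩ <;> simp [h]

lemma dm_psi [Finite F] {a : (Vinf F) ≃ₗ[F] (Vinf F)} (ha : a ∈ Bgrp F) (x : ℕ → Bool) (k : ℕ) :
    dm (act a (coordSpan F x)) k = ∑ i ∈ Finset.range k, (if x i = true then 1 else 0) := by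
  rw [dm_eq_sum]
  refine Finset.sum_congr rfl fun i _ => ?_
  rw [symInc_act_B ha, symInc_coordSpan]

/-- The 0–1 sequence of the symbol of `X`. -/
noncomputable def symbI (X : Submodule F (Vinf F)) : ℕ → Bool :=
  fun k => decide (symInc F X k = 1)

lemma coordSpan_inf_congr {x y : ℕ → Bool} {n : ℕ} (h : ∀ k < n, x k = y k) :
    coordSpan F x ⊓ Vn F n = coordSpan F y ⊓ Vn F n := by
  ext v
  simp only [Submodule.mem_inf, mem_coordSpan]
  refine and_congr_left fun hv => forall_congr' fun i => ?_
  by_cases hi : i < n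
  · rw [h i hi]
  · simp [hv i (not_lt.mp hi)]

lemma Ev_congr {x y : ℕ → Bool} {n : ℕ} (h : ∀ k < n, x k = y k) (X : Submodule F (Vinf F)) :
    Ev n x X = Ev n y X := by
  ext a
  change _ = _ ↔ _ = _
  rw [act_inf_Vn (a.2 n), act_inf_Vn (a.2 n), coordSpan_inf_congr h]

lemma symb_of_Ev [Finite F] {x : ℕ → Bool} {n : ℕ} {X : Submodule F (Vinf F)} {a : ↥(Bgrp F)}
    (ha : a ∈ Ev n x X) (k : ℕ) (hk : k < n) : x k = symbI X k := by
  have := symInc_congr' hk ha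
  rw [symInc_act_B a.2, symInc_coordSpan] at this
  unfold symbI
  rw [← this]
  cases x k <;> simp

lemma psi_preimage [Finite F] {n : ℕ} {p : Submodule F (Vinf F) × Submodule F (Vinf F)}
    (hp : p ∈ Upair F n p.1 p.2) :
    psiMap F ⁻¹' Upair F n p.1 p.2 = Aset n (symb p.1 n) (symb p.2 n) ×ˢ
      (Ev n (symbI p.1) p.1 ×ˢ Ev n (symbI p.2) p.2) := by
  ext ⟨⟨⟨x, y⟩, hxy⟩, a, b⟩
  constructor
  · rintro ⟨-, h2, h3, h4⟩
    have h2' : a ∈ Ev n x p.1 := h2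
    have h3' : b ∈ Ev n y p.2 := h3
    have hx := symb_of_Ev h2'
    have hy := symb_of_Ev h3'
    rw [Ev_congr hx] at h2'
    rw [Ev_congr hy] at h3'
    refine ⟨⟨fun k => ⟨hx k k.2, hy k k.2⟩, fun k hk => ?_⟩, h2', h3'⟩
    have hs : symInc F (act (a : (Vinf F) ≃ₗ[F] (Vinf F)) (coordSpan F x)) k
        = symInc F (act (b : (Vinf F) ≃ₗ[F] (Vinf F)) (coordSpan F y)) k :=
      symInc_congr (h4 k hk) (h4 (k + 1) (by omega))
    rw [symInc_act_B a.2, symInc_act_B b.2, symInc_coordSpan, symInc_coordSpan] at hs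
    change x k = y k
    revert hs
    cases x k <;> cases y k <;> simp
  · rintro ⟨⟨h1, h2⟩, h3, h4⟩
    have hx : ∀ k < n, x k = symbI p.1 k := fun k hk => (h1 ⟨k, hk⟩).1
    have hy : ∀ k < n, y k = symbI p.2 k := fun k hk => (h1 ⟨k, hk⟩).2
    have h3' : a ∈ Ev n x p.1 := by rw [Ev_congr hx]; exact h3
    have h4' : b ∈ Ev n y p.2 := by rw [Ev_congr hy]; exact h4
    refine ⟨Grel_psi _, h3', h4', fun k hk => ?_⟩
    change dm (act (a : (Vinf F) ≃ₗ[F] (Vinf F)) (coordSpan F x)) k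
      = dm (act (b : (Vinf F) ≃ₗ[F] (Vinf F)) (coordSpan F y)) k
    induction k, hk using Nat.le_induction with
    | base =>
      rw [dm_congr le_rfl h3', dm_congr le_rfl h4']
      exact hp.2.2.2 n le_rfl
    | succ k hk ih =>
      have e : x k = y k := h2 k hk
      rw [dm_succ', dm_succ', ih, symInc_act_B a.2, symInc_act_B b.2, symInc_coordSpan,
        symInc_coordSpan, e]

/-- The weight of the symbol of `X` up to level `n`. -/
noncomputable def wt (X : Submodule F (Vinf F)) (n : ℕ) : ℕ :=
  ∑ k ∈ Finset.range n, (k + 1) * symInc F X k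

lemma cocycle_sum {g : (Vinf F) ≃ₗ[F] (Vinf F)} {N n : ℕ} (hg : StabFrom g N) (hn : N ≤ n)
    (X : Submodule F (Vinf F)) :
    (∑ᶠ k : ℕ, ((k : ℤ) + 1) * ((symInc F X k : ℤ) - (symInc F (act g X) k : ℤ)))
      = (wt X n : ℤ) - wt (act g X) n := by
  rw [finsum_eq_sum_of_support_subset (s := Finset.range n)]
  · unfold wt
    push_cast
    rw [← Finset.sum_sub_distrib]
    exact Finset.sum_congr rfl fun k _ => by ring
  · intro k hk
    by_contra hcon
    apply hk
    have hk' : n ≤ k := by simpa using hcon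
    have := symInc_congr (dm_act (hg k (by omega)) X) (dm_act (hg (k + 1) (by omega)) X)
    simp only
    rw [this]
    simp

lemma wt_congr {X Y : Submodule F (Vinf F)} {n : ℕ} (h : X ⊓ Vn F n = Y ⊓ Vn F n) :
    wt X n = wt Y n :=
  Finset.sum_congr rfl fun k hk => by rw [symInc_congr' (Finset.mem_range.mp hk) h]

lemma rho_Upair [Finite F] (t₁ t₂ : ℝ)
    (μB : Measure ↥(Bgrp F)) (hμBprob : IsProbabilityMeasure μB)
    (hμBinv : ∀ (b : ↥(Bgrp F)) (S : Set ↥(Bgrp F)), MeasurableSet S →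
      μB ((fun x => b * x) ⁻¹' S) = μB S)
    (R : Measure ↥Tset)
    (hR : ∀ (n : ℕ) (c d : Fin n → Bool), trueCount c = trueCount d →
      R (Aset n c d) = ENNReal.ofReal (t₁ ^ trueCount c * t₂ ^ (n - trueCount c)))
    (ρ : Measure (Submodule F (Vinf F) × Submodule F (Vinf F)))
    (hρ : ∀ A : Set (Submodule F (Vinf F) × Submodule F (Vinf F)), MeasurableSet A →
      ρ A = (R.prod (μB.prod μB)) (psiMap F ⁻¹' A))
    {n : ℕ} {p : Submodule F (Vinf F) × Submodule F (Vinf F)} (hp : p ∈ Upair F n p.1 p.2) :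
    ρ (Upair F n p.1 p.2) * (Nat.card F : ENNReal) ^ (wt p.1 n + wt p.2 n)
      = ENNReal.ofReal (t₁ ^ dm p.1 n * t₂ ^ (n - dm p.1 n)) *
        ((Nat.card F : ENNReal) ^ (∑ i ∈ Finset.range (dm p.1 n), (i + 1)) *
          (Nat.card F : ENNReal) ^ (∑ i ∈ Finset.range (dm p.1 n), (i + 1))) := by
  have hd : dm p.1 n = dm p.2 n := hp.2.2.2 n le_rfl
  have hs : ∀ X : Submodule F (Vinf F), ∀ k < n,
      symInc F X k = if symbI X k = true then 1 else 0 := by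
    intro X k _
    unfold symbI
    rcases symInc_cases X k with ⟨h, -⟩ | ⟨h, -⟩ <;> simp [h]
  have e1 := mu_Ev μB hμBprob hμBinv n (symbI p.1) p.1 (hs p.1)
  have e2 := mu_Ev μB hμBprob hμBinv n (symbI p.2) p.2 (hs p.2)
  rw [hρ _ (measurableSet_Upair _ _ _), psi_preimage hp, Measure.prod_prod, Measure.prod_prod,
    hR n _ _ (by rw [trueCount_symb, trueCount_symb, hd]), trueCount_symb, pow_add]
  rw [← hd] at e2
  nth_rewrite 1 [← e1]
  rw [← e2]
  unfold wt
  ring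

lemma ennreal_ratio {q : ℕ} (hq : 0 < q) {a b K : ENNReal} {s s' : ℕ}
    (ha : a * (q : ENNReal) ^ s = K) (hb : b * (q : ENNReal) ^ s' = K) :
    b = ENNReal.ofReal ((q : ℝ) ^ ((s : ℤ) - s')) * a := by
  have hq0 : (q : ENNReal) ^ s' ≠ 0 := pow_ne_zero _ (by exact_mod_cast hq.ne')
  have hqt : (q : ENNReal) ^ s' ≠ ⊤ := ENNReal.pow_ne_top (ENNReal.natCast_ne_top q)
  have hqr : (q : ℝ) ≠ 0 := by exact_mod_cast hq.ne'
  have hz : ENNReal.ofReal ((q : ℝ) ^ ((s : ℤ) - s')) * (q : ENNReal) ^ s' = (q : ENNReal) ^ s := by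
    have hc : ∀ m : ℕ, (q : ENNReal) ^ m = ENNReal.ofReal ((q : ℝ) ^ m) := by
      intro m
      rw [ENNReal.ofReal_pow (Nat.cast_nonneg q), ENNReal.ofReal_natCast]
    rw [hc, hc, ← ENNReal.ofReal_mul (by positivity), ← zpow_natCast, ← zpow_natCast,
      ← zpow_add₀ hqr, sub_add_cancel]
  rw [← ENNReal.mul_left_inj hq0 hqt, hb, ← ha, ← hz]
  ring

end helpers3

/-- **Corollary 5.10** (quasi-invariance of `ρ_{t₁,t₂}` under `GLB × GLB`): with `R_{t₁,t₂}`
the measure on `T` determined by `R(A(i;j)) = t₁^{∑ i_k} t₂^{n-∑ i_k}`, `μB` the Haar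
probability measure of `B`, and `ρ = ρ_{t₁,t₂}` the pushforward of `R ⊗ μB ⊗ μB` under `ψ`:
for all `g, h ∈ GLB` the cocycle exponents `∑_k k(Sym(X)_k - Sym(gX)_k)` and
`∑_k k(Sym(Y)_k - Sym(hY)_k)` have finitely many nonzero terms, and for every measurable `A`,
`ρ((g,h)·A) = ∫_A q^{∑_k k(Sym(X)_k - Sym(gX)_k) + ∑_k k(Sym(Y)_k - Sym(hY)_k)} dρ(X,Y)`. -/
theorem rho_quasi_invariant_with_cocycle
    (t₁ t₂ : ℝ) (ht₁ : 0 ≤ t₁) (ht₂ : 0 ≤ t₂) (hsum : t₁ + t₂ = 1)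
    (μB : Measure ↥(Bgrp F)) (hμBprob : IsProbabilityMeasure μB)
    (hμBinv : ∀ (b : ↥(Bgrp F)) (S : Set ↥(Bgrp F)), MeasurableSet S →
      μB ((fun x => b * x) ⁻¹' S) = μB S)
    (R : Measure ↥Tset)
    (hR : ∀ (n : ℕ) (c d : Fin n → Bool), trueCount c = trueCount d →
      R (Aset n c d) = ENNReal.ofReal (t₁ ^ trueCount c * t₂ ^ (n - trueCount c)))
    (ρ : Measure (Submodule F (Vinf F) × Submodule F (Vinf F)))
    (hρ : ∀ A : Set (Submodule F (Vinf F) × Submodule F (Vinf F)), MeasurableSet A →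
      ρ A = (R.prod (μB.prod μB)) (psiMap F ⁻¹' A)) :
    (∀ g : (Vinf F) ≃ₗ[F] (Vinf F), g ∈ GLBgrp F → ∀ X : Submodule F (Vinf F),
      (Function.support (fun k : ℕ => ((k : ℤ) + 1) *
        ((symInc F X k : ℤ)
          - (symInc F (Submodule.map (g : (Vinf F) →ₗ[F] (Vinf F)) X) k : ℤ)))).Finite) ∧
    (∀ g h : (Vinf F) ≃ₗ[F] (Vinf F), g ∈ GLBgrp F → h ∈ GLBgrp F →
      ∀ A : Set (Submodule F (Vinf F) × Submodule F (Vinf F)), MeasurableSet A →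
      ρ ((fun p : Submodule F (Vinf F) × Submodule F (Vinf F) =>
            (Submodule.map (g : (Vinf F) →ₗ[F] (Vinf F)) p.1,
             Submodule.map (h : (Vinf F) →ₗ[F] (Vinf F)) p.2)) '' A)
        = ∫⁻ p in A, ENNReal.ofReal ((Fintype.card F : ℝ) ^
            ((∑ᶠ k : ℕ, ((k : ℤ) + 1) *
              ((symInc F p.1 k : ℤ)
                - (symInc F (Submodule.map (g : (Vinf F) →ₗ[F] (Vinf F)) p.1) k : ℤ)))
            + (∑ᶠ k : ℕ, ((k : ℤ) + 1) *
              ((symInc F p.2 k : ℤ)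
                - (symInc F (Submodule.map (h : (Vinf F) →ₗ[F] (Vinf F)) p.2) k : ℤ))))) ∂ρ) := by
  refine ⟨?_, ?_⟩
  · rintro g ⟨N, hN⟩ X
    refine (Set.finite_lt_nat N).subset fun k hk => ?_
    by_contra hcon
    apply hk
    have hk' : N ≤ k := not_lt.mp hcon
    have := symInc_congr (dm_act (hN k (by omega)) X) (dm_act (hN (k + 1) (by omega)) X)
    simp only
    rw [this]
    simp
  intro g h hg hh A hA
  obtain ⟨N, hgN, hhN⟩ := exists_stab hg hh
  have hmeas := measurable_act2_inv hg hh
  set f : Submodule F (Vinf F) × Submodule F (Vinf F) → ENNReal := fun p =>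
    ENNReal.ofReal ((Fintype.card F : ℝ) ^
            ((∑ᶠ k : ℕ, ((k : ℤ) + 1) *
              ((symInc F p.1 k : ℤ)
                - (symInc F (Submodule.map (g : (Vinf F) →ₗ[F] (Vinf F)) p.1) k : ℤ)))
            + (∑ᶠ k : ℕ, ((k : ℤ) + 1) *
              ((symInc F p.2 k : ℤ)
                - (symInc F (Submodule.map (h : (Vinf F) →ₗ[F] (Vinf F)) p.2) k : ℤ))))) with hf
  change ρ (act2 g h '' A) = ∫⁻ p in A, f p ∂ρ
  have hfU : ∀ (n : ℕ), N ≤ n → ∀ p, f p = ENNReal.ofReal ((Nat.card F : ℝ) ^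
      (((wt p.1 n + wt p.2 n : ℕ) : ℤ) - ((wt (act g p.1) n + wt (act h p.2) n : ℕ) : ℤ))) := by
    intro n hn p
    simp only [hf]
    rw [Nat.card_eq_fintype_card]
    congr 2
    have e1 := cocycle_sum hgN hn p.1
    have e2 := cocycle_sum hhN hn p.2
    rw [e1, e2]
    push_cast
    ring
  have hmap : ∀ S, MeasurableSet S → (ρ.map (act2 g⁻¹ h⁻¹)) S = ρ (act2 g h '' S) := by
    intro S hS
    rw [Measure.map_apply hmeas hS, act2_image]
  -- the values on basic sets
  have hbasic : ∀ (n : ℕ), N ≤ n → ∀ p : Submodule F (Vinf F) × Submodule F (Vinf F),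
      p ∈ Upair F n p.1 p.2 →
      (ρ.map (act2 g⁻¹ h⁻¹)) (Upair F n p.1 p.2) = (ρ.withDensity f) (Upair F n p.1 p.2) := by
    intro n hn p hp
    rw [hmap _ (measurableSet_Upair _ _ _), image_Upair hg hh hgN hhN hn,
      withDensity_apply f (measurableSet_Upair _ _ _)]
    have hp' : act2 g h p ∈ Upair F n (act g p.1) (act h p.2) :=
      (mem_Upair_act2 hg hh hgN hhN hn _ _ p).mpr hp
    have hr1 := rho_Upair t₁ t₂ μB hμBprob hμBinv R hR ρ hρ hp
    have hr2 := rho_Upair t₁ t₂ μB hμBprob hμBinv R hR ρ hρ (p := act2 g h p) hp'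
    have hdm : dm (act2 g h p).1 n = dm p.1 n := dm_act (hgN n hn) p.1
    rw [hdm] at hr2
    have hrat := ennreal_ratio (Nat.card_pos (α := F)) hr1 hr2
    have hconst : ∀ r ∈ Upair F n p.1 p.2, f r = f p := by
      intro r hr
      rw [hfU n hn, hfU n hn, wt_congr hr.2.1, wt_congr hr.2.2.1,
        wt_congr ((act_inf_eq_iff (hgN n hn) _ _).mpr hr.2.1),
        wt_congr ((act_inf_eq_iff (hhN n hn) _ _).mpr hr.2.2.1)]
    rw [setLIntegral_congr_fun (measurableSet_Upair _ _ _) hconst, setLIntegral_const, hfU n hn p]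
    exact hrat
  have hfin : ∀ (n : ℕ) (p : Submodule F (Vinf F) × Submodule F (Vinf F)),
      p ∈ Upair F n p.1 p.2 → ρ (Upair F n p.1 p.2) ≠ ⊤ := by
    intro n p hp htop
    have hr1 := rho_Upair t₁ t₂ μB hμBprob hμBinv R hR ρ hρ hp
    have hq : (Nat.card F : ENNReal) ≠ 0 := by exact_mod_cast (Nat.card_pos (α := F)).ne'
    rw [htop, ENNReal.top_mul (pow_ne_zero _ hq)] at hr1
    have hK : ∀ m : ℕ, (Nat.card F : ENNReal) ^ m ≠ ⊤ := fun m =>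
      ENNReal.pow_ne_top (ENNReal.natCast_ne_top _)
    exact ENNReal.mul_ne_top ENNReal.ofReal_ne_top (ENNReal.mul_ne_top (hK _) (hK _)) hr1.symm
  have hcompl : ρ {p | Grel p}ᶜ = 0 := by
    rw [hρ _ measurableSet_Grel.compl]
    have : psiMap F ⁻¹' {p | Grel p}ᶜ = ∅ := by
      ext w
      simp [Grel_psi w]
    rw [this, measure_empty]
  have hcompl1 : (ρ.map (act2 g⁻¹ h⁻¹)) {p | Grel p}ᶜ = 0 := by
    rw [Measure.map_apply hmeas measurableSet_Grel.compl, ← hcompl]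
    congr 1
    ext p
    exact not_congr (Grel_act2_iff (inv_mem hg) (inv_mem hh))
  have hcompl2 : (ρ.withDensity f) {p | Grel p}ᶜ = 0 := by
    rw [withDensity_apply f measurableSet_Grel.compl]
    exact setLIntegral_measure_zero _ _ hcompl
  have hcovval : ∀ t ∈ cov F N, t = ∅ ∨ ∃ m ≥ N,
      ∃ p : Submodule F (Vinf F) × Submodule F (Vinf F),
      p ∈ Upair F m p.1 p.2 ∧ t = Upair F m p.1 p.2 := by
    rintro _ ⟨m, hm, X, Y, rfl⟩
    rcases Set.eq_empty_or_nonempty (Upair F m X Y) with he | ⟨p, hp⟩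
    · exact Or.inl he
    · exact Or.inr ⟨m, hm, p, mem_self_of_mem hp, Upair_eq_of_mem hp⟩
  have heq : ρ.map (act2 g⁻¹ h⁻¹) = ρ.withDensity f := by
    refine Measure.ext_of_generateFrom_of_cover (S := {A | ∃ (n : ℕ) (X Y : Submodule F (Vinf F)),
      A = Upair F n X Y}) (T := insert {p | Grel p}ᶜ (cov F N)) rfl
      ((cov_countable N).insert _) isPiSystem_Upair ?_ ?_ ?_ ?_
    · rw [Set.sUnion_insert, sUnion_cov, Set.compl_union_self]
    · rintro t (rfl | ht)
      · rw [hcompl1]; exact ENNReal.zero_ne_top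
      · rcases hcovval t ht with rfl | ⟨m, hm, p, hp, rfl⟩
        · simp
        · rw [hmap _ (measurableSet_Upair _ _ _), image_Upair hg hh hgN hhN hm]
          exact hfin m (act2 g h p) ((mem_Upair_act2 hg hh hgN hhN hm _ _ p).mpr hp)
    · rintro t (rfl | ht) _ ⟨n, X, Y, rfl⟩
      · rw [measure_mono_null Set.inter_subset_right hcompl1,
          measure_mono_null Set.inter_subset_right hcompl2]
      · rcases Upair_inter_cov (n := n) (X := X) (Y := Y) ht with h0 | ⟨m, hm, p, hp, he⟩
        · rw [h0]; simp
        · rw [he]; exact hbasic m hm p hp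
    · rintro t (rfl | ht)
      · rw [hcompl1, hcompl2]
      · rcases hcovval t ht with rfl | ⟨m, hm, p, hp, rfl⟩
        · simp
        · exact hbasic m hm p hp
  rw [← hmap A hA, heq, withDensity_apply f hA]
end

section
/- Let p ∈ F_q[x] be a monic irreducible polynomial of degree k, let λ = (λ_1 ≥ λ_2 ≥ ... > 0) be a partition of m, and set n = km. Let g ∈ GL(n,q) be such that F_q^n, regarded as an F_q[x]-module with x acting as g, is isomorphic to ⊕_i F_q[x]/(p(x)^{λ_i}), and let y ∈ F_{q^k}^× and g' ∈ GL(m,q^k) be such that F_{q^k}^m, as an F_{q^k}[x]-module with x acting as g', is isomorphic to ⊕_i F_{q^k}[x]/((x−y)^{λ_i}). For a partition μ = (μ_1 ≥ ... ≥ μ_r > 0) of n, let ψ^q_μ(g) denote the number of flags V_1 ⊆ V_2 ⊆ ... ⊆ V_r of subspaces of F_q^n with dim V_j = μ_1 + ... + μ_j that are g-invariant (g·V_j = V_j for all j), and define ψ^{q^k}_ν(g') analogously for partitions ν of m and subspaces of F_{q^k}^m. Then ψ^q_μ(g) = ψ^{q^k}_ν(g') if μ_i = k·ν_i for all i for some partition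 ν of m, and ψ^q_μ(g) = 0 if μ is not of this form. (Identity (3.11), proved in Section 3.2 via Proposition 3.7.) -/
/-!
STATEMENT 17: identity (3.11) of Section 3.2 — invariant-flag counts for a matrix whose
module structure is built from an irreducible polynomial `p` of degree `k` match invariant-flag
counts over the extension field `F_{q^k}`.
-/

variable (F : Type) [Field F] [Fintype F] [DecidableEq F]

/-- `ψ_μ(g)`: the number of `g`-invariant flags `V_1 ⊆ ... ⊆ V_r` of subspaces of `K^N` with
`dim V_j = μ_1 + ... + μ_j`. -/
noncomputable def flagCount (K : Type) [Field K] {N s : ℕ} (g : GL (Fin N) K)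
    (μ : Fin s → ℕ) : ℕ :=
  Nat.card {W : Fin s → Submodule K (Fin N → K) //
    (∀ j j' : Fin s, j ≤ j' → W j ≤ W j') ∧
    (∀ j : Fin s, Module.finrank K ↥(W j)
      = ∑ l ∈ Finset.univ.filter (fun l : Fin s => l ≤ j), μ l) ∧
    (∀ j : Fin s, Submodule.map (Matrix.mulVecLin (g : Matrix (Fin N) (Fin N) K)) (W j) = W j)}

section Aux
open Polynomial

lemma aux_stable {K V : Type*} [Field K] [AddCommGroup V] [Module K V] (f : V →ₗ[K] V)
    (W : Submodule K V) (hW : ∀ v ∈ W, f v ∈ W) (a : K[X]) (v : V) (hv : v ∈ W) :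
    aeval f a v ∈ W := by
  induction a using Polynomial.induction_on' generalizing v with
  | add a b ha hb => simpa using W.add_mem (ha v hv) (hb v hv)
  | monomial n c =>
    rw [aeval_monomial]
    have : ∀ n : ℕ, (f ^ n) v ∈ W := by
      intro n
      induction n with
      | zero => simpa using hv
      | succ n ih => rw [pow_succ']; exact hW _ ih
    simpa [Module.algebraMap_end_apply] using W.smul_mem c (this n)

lemma aux_map_eq_iff {K V : Type*} [Field K] [AddCommGroup V] [Module K V]
    [FiniteDimensional K V] (f : V →ₗ[K] V) (hf : Function.Injective f)
    (W : Submodule K V) : W.map f = W ↔ ∀ v ∈ W, f v ∈ W := by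
  constructor
  · intro h v hv
    have := Submodule.mem_map_of_mem (f := f) hv
    rwa [h] at this
  · intro h
    apply Submodule.eq_of_le_of_finrank_eq
    · rintro _ ⟨v, hv, rfl⟩; exact h v hv
    · exact (Submodule.equivMapOfInjective f hf W).finrank_eq.symm

/-- push a stable subspace along an additive equivalence -/
def auxPush {K V K' V' : Type*} [Field K] [AddCommGroup V] [Module K V]
    [Field K'] [AddCommGroup V'] [Module K' V'] (f : V →ₗ[K] V) (f' : V' →ₗ[K'] V')
    (Ψ : V ≃+ V')
    (H : ∀ b : K'[X], ∃ a : K[X], ∀ v, Ψ (aeval f a v) = aeval f' b (Ψ v))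
    (W : {W : Submodule K V // ∀ v ∈ W, f v ∈ W}) :
    {W : Submodule K' V' // ∀ v ∈ W, f' v ∈ W} :=
  ⟨{ carrier := {w | Ψ.symm w ∈ W.1}
     add_mem' := by
      intro a b ha hb
      simpa using W.1.add_mem ha hb
     zero_mem' := by simp
     smul_mem' := by
      intro c w hw
      obtain ⟨a, ha⟩ := H (C c)
      have h1 := ha (Ψ.symm w)
      simp only [AddEquiv.apply_symm_apply, aeval_C, Module.algebraMap_end_apply] at h1
      simp only [Set.mem_ofPred_eq, ← h1, AddEquiv.symm_apply_apply]
      exact aux_stable f W.1 W.2 a _ hw }, by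
    intro w hw
    obtain ⟨a, ha⟩ := H X
    have h1 := ha (Ψ.symm w)
    simp only [AddEquiv.apply_symm_apply, aeval_X] at h1
    change Ψ.symm (f' w) ∈ W.1
    rw [← h1, AddEquiv.symm_apply_apply]
    exact aux_stable f W.1 W.2 a _ hw⟩

lemma mem_auxPush {K V K' V' : Type*} [Field K] [AddCommGroup V] [Module K V]
    [Field K'] [AddCommGroup V'] [Module K' V'] (f : V →ₗ[K] V) (f' : V' →ₗ[K'] V')
    (Ψ : V ≃+ V')
    (H : ∀ b : K'[X], ∃ a : K[X], ∀ v, Ψ (aeval f a v) = aeval f' b (Ψ v))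
    (W : {W : Submodule K V // ∀ v ∈ W, f v ∈ W}) (w : V') :
    w ∈ (auxPush f f' Ψ H W).1 ↔ Ψ.symm w ∈ W.1 := Iff.rfl

lemma aux_equiv {K V K' V' : Type*} [Field K] [AddCommGroup V] [Module K V]
    [Field K'] [AddCommGroup V'] [Module K' V'] (f : V →ₗ[K] V) (f' : V' →ₗ[K'] V')
    (Ψ : V ≃+ V')
    (H1 : ∀ a : K[X], ∃ b : K'[X], ∀ v, Ψ (aeval f a v) = aeval f' b (Ψ v))
    (H2 : ∀ b : K'[X], ∃ a : K[X], ∀ v, Ψ (aeval f a v) = aeval f' b (Ψ v)) :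
    ∃ e : {W : Submodule K V // ∀ v ∈ W, f v ∈ W} ≃ {W : Submodule K' V' // ∀ v ∈ W, f' v ∈ W},
      ∀ W w, w ∈ (e W).1 ↔ Ψ.symm w ∈ W.1 := by
  have H1' : ∀ a : K[X], ∃ b : K'[X], ∀ w, Ψ.symm (aeval f' b w) = aeval f a (Ψ.symm w) := by
    intro a
    obtain ⟨b, hb⟩ := H1 a
    refine ⟨b, fun w => ?_⟩
    rw [AddEquiv.symm_apply_eq, hb, AddEquiv.apply_symm_apply]
  refine ⟨⟨auxPush f f' Ψ H2, auxPush f' f Ψ.symm H1', ?_, ?_⟩, fun W w => Iff.rfl⟩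
  · intro W
    ext v
    simp [mem_auxPush]
  · intro W
    ext v
    simp [mem_auxPush]

lemma aux_dvd {F E : Type*} [Field F] [Field E] (i : F →+* E) (p : F[X])
    (hp : Irreducible p) (hsep : p.Separable) (α : E) (hα : eval₂ i α p = 0) (n : ℕ) (f : F[X]) :
    (X - C α) ^ n ∣ f.map i ↔ p ^ n ∣ f := by
  have hd : (X - C α) ∣ p.map i := by
    rw [dvd_iff_isRoot, IsRoot.def, eval_map, hα]
  constructor
  · induction n generalizing f with
    | zero => simp
    | succ n ih =>
      intro h
      have h1 : (X - C α) ∣ f.map i := (dvd_pow_self _ n.succ_ne_zero).trans h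
      have h2 : p ∣ f := by
        by_contra hnd
        have hc : IsCoprime p f := (hp.coprime_iff_not_dvd).2 hnd
        have hc' := hc.map (mapRingHom i)
        exact (irreducible_X_sub_C α).not_isUnit (hc'.isUnit_of_dvd' hd h1)
      obtain ⟨f, rfl⟩ := h2
      obtain ⟨u, hu⟩ := hd
      have hs : (p.map i).Separable := hsep.map
      rw [hu] at hs
      have hcop : IsCoprime (X - C α) u := hs.isCoprime
      rw [Polynomial.map_mul, hu, pow_succ', mul_assoc] at h
      have h3 := (mul_dvd_mul_iff_left (X_sub_C_ne_zero α)).1 h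
      have h4 := (hcop.pow_left (m := n)).dvd_of_dvd_mul_left h3
      rw [pow_succ']
      exact mul_dvd_mul_left p (ih f h4)
  · rintro ⟨h, rfl⟩
    rw [Polynomial.map_mul, Polynomial.map_pow]
    exact (pow_dvd_pow_of_dvd hd n).trans (dvd_mul_right _ _)

lemma aux_phi {F E : Type*} [Field F] [Field E] (i : F →+* E) (p : F[X])
    (hp : Irreducible p) (hsep : p.Separable) (α y : E) (hα : eval₂ i α p = 0) :
    ∃ Φ : F[X] →+* E[X], ∀ n f, (X - C y) ^ n ∣ Φ f ↔ p ^ n ∣ f := by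
  refine ⟨((taylorEquiv (α - y)).toRingEquiv.toRingHom).comp (mapRingHom i), fun n f => ?_⟩
  rw [← aux_dvd i p hp hsep α hα]
  have : (X - C y) ^ n = (taylorEquiv (α - y)) ((X - C α) ^ n) := by
    rw [map_pow, map_sub]
    change _ = (taylor (α - y) X - taylor (α - y) (C α)) ^ n
    rw [taylor_X, taylor_C, C_sub]
    congr 1
    ring
  rw [this]
  change (taylorEquiv (α - y)) _ ∣ (taylorEquiv (α - y)) (f.map i) ↔ _
  rw [map_dvd_iff]

lemma aux_card {F : Type*} [Field F] [Fintype F] (p : F[X]) (hp : p ≠ 0) :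
    Nat.card (F[X] ⧸ Ideal.span {p}) = Fintype.card F ^ p.natDegree := by
  have := (AdjoinRoot.powerBasis hp).finite
  have h := Module.natCard_eq_pow_finrank (K := F) (V := AdjoinRoot p)
  rw [(AdjoinRoot.powerBasis hp).finrank, AdjoinRoot.powerBasis_dim, Nat.card_eq_fintype_card (α := F)] at h
  exact h

lemma aux_finite {F : Type*} [Field F] [Fintype F] (p : F[X]) (hp : p ≠ 0) :
    Finite (F[X] ⧸ Ideal.span {p}) := by
  apply Nat.finite_of_card_ne_zero
  rw [aux_card p hp]
  exact pow_ne_zero _ Fintype.card_ne_zero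

lemma aux_quot {F E : Type*} [Field F] [Field E] [Fintype F] [Fintype E]
    (p : F[X]) (hp : Irreducible p) (hE : Fintype.card E = Fintype.card F ^ p.natDegree) (y : E)
    (Φ : F[X] →+* E[X]) (hΦ : ∀ n f, (X - C y) ^ n ∣ Φ f ↔ p ^ n ∣ f) (n : ℕ) :
    ∃ e : (F[X] ⧸ Ideal.span {p ^ n}) ≃+ (E[X] ⧸ Ideal.span {(X - C y) ^ n}),
      ∀ f, e (Ideal.Quotient.mk _ f) = Ideal.Quotient.mk _ (Φ f) := by
  have hle : Ideal.span {p ^ n} ≤ (Ideal.span {(X - C y) ^ n}).comap Φ := by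
    intro f hf
    rw [Ideal.mem_comap, Ideal.mem_span_singleton, hΦ]
    exact Ideal.mem_span_singleton.1 hf
  have hge : (Ideal.span {(X - C y) ^ n}).comap Φ ≤ Ideal.span {p ^ n} := by
    intro f hf
    rw [Ideal.mem_comap, Ideal.mem_span_singleton, hΦ] at hf
    exact Ideal.mem_span_singleton.2 hf
  have h0 : p ^ n ≠ 0 := pow_ne_zero _ hp.ne_zero
  have h0' : (X - C y) ^ n ≠ 0 := pow_ne_zero _ (X_sub_C_ne_zero y)
  have := aux_finite _ h0
  have := aux_finite _ h0'
  have hinj : Function.Injective (Ideal.quotientMap _ Φ hle) :=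
    Ideal.quotientMap_injective' hge
  have hcard : Nat.card (E[X] ⧸ Ideal.span {(X - C y) ^ n}) ≤
      Nat.card (F[X] ⧸ Ideal.span {p ^ n}) := by
    rw [aux_card _ h0, aux_card _ h0', hE, natDegree_pow, natDegree_pow, natDegree_X_sub_C,
      ← pow_mul, mul_one, mul_comm]
  have hbij := hinj.bijective_of_nat_card_le hcard
  exact ⟨(RingEquiv.ofBijective _ hbij).toAddEquiv, fun f => rfl⟩

lemma aux_emb {F E : Type} [Field F] [Field E] [Fintype F] [Fintype E]
    (p : F[X]) (hp : Irreducible p) (hE : Fintype.card E = Fintype.card F ^ p.natDegree) :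
    ∃ (i : F →+* E) (α : E), eval₂ i α p = 0 := by
  have := Fact.mk hp
  have : Finite (AdjoinRoot p) := aux_finite p hp.ne_zero
  have := Fintype.ofFinite (AdjoinRoot p)
  have hc : Fintype.card (AdjoinRoot p) = Fintype.card E := by
    rw [hE, ← aux_card p hp.ne_zero, ← Nat.card_eq_fintype_card]; rfl
  let e := FiniteField.ringEquivOfCardEq hc
  refine ⟨e.toRingHom.comp (AdjoinRoot.of p), e (AdjoinRoot.root p), ?_⟩
  have := congrArg e (AdjoinRoot.eval₂_root p)
  rw [map_zero, ← RingEquiv.coe_toRingHom, hom_eval₂] at this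
  exact this

/-- the key additive equivalence -/
lemma aux_key {F E : Type} [Field F] [Field E] [Fintype F] [Fintype E]
    (p : F[X]) (hp : Irreducible p) (hE : Fintype.card E = Fintype.card F ^ p.natDegree) (y : E)
    {r : ℕ} (lam : Fin r → ℕ) {V V' : Type} [AddCommGroup V] [Module F V]
    [AddCommGroup V'] [Module E V'] (f : V →ₗ[F] V) (f' : V' →ₗ[E] V')
    (hg : Nonempty (Module.AEval' f ≃ₗ[F[X]] ∀ i : Fin r, F[X] ⧸ Ideal.span {p ^ lam i}))
    (hg' : Nonempty (Module.AEval' f' ≃ₗ[E[X]]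
      ∀ i : Fin r, E[X] ⧸ Ideal.span {(X - C y) ^ lam i})) :
    ∃ Ψ : V ≃+ V', 
    (∀ a : F[X], ∃ b : E[X], ∀ v, Ψ (aeval f a v) = aeval f' b (Ψ v)) ∧
    (∀ b : E[X], ∃ a : F[X], ∀ v, Ψ (aeval f a v) = aeval f' b (Ψ v)) := by
  obtain ⟨i, α, hα⟩ := aux_emb p hp hE
  obtain ⟨Φ, hΦ⟩ := aux_phi i p hp (PerfectField.separable_of_irreducible hp) α y hα
  choose e he using aux_quot p hp hE y Φ hΦ
  obtain ⟨A⟩ := hg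
  obtain ⟨B⟩ := hg'
  let Q := AddEquiv.piCongrRight fun i : Fin r => e (lam i)
  let Ψ : V ≃+ V' := (Module.AEval'.of f).toAddEquiv.trans (A.toAddEquiv.trans
    (Q.trans (B.symm.toAddEquiv.trans (Module.AEval'.of f').symm.toAddEquiv)))
  have hΨ : ∀ v, Ψ v = (Module.AEval'.of f').symm (B.symm (Q (A (Module.AEval'.of f v)))) :=
    fun v => rfl
  have key : ∀ (a : F[X]) (b : E[X]), (∀ j, (X - C y) ^ lam j ∣ Φ a - b) → 
      ∀ v, Ψ (aeval f a v) = aeval f' b (Ψ v) := by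
    intro a b hab v
    have h1 : Module.AEval'.of f (aeval f a v) = a • Module.AEval'.of f v :=
      Module.AEval.of_aeval_smul f a v
    have h2 : ∀ w, (Module.AEval'.of f').symm (b • w) =
      aeval f' b ((Module.AEval'.of f').symm w) := fun w => Module.AEval.of_symm_smul f' b w
    have h3 : ∀ w, Q (a • w) = b • Q w := by
      intro w
      funext j
      change e (lam j) (a • w j) = b • e (lam j) (w j)
      obtain ⟨z, hz⟩ := Ideal.Quotient.mk_surjective (w j)
      rw [← hz, he]
      have : a • Ideal.Quotient.mk (Ideal.span {p ^ lam j}) z = Ideal.Quotient.mk _ (a * z) := rfl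
      rw [this, he]
      have : b • Ideal.Quotient.mk (Ideal.span {(X - C y) ^ lam j}) (Φ z)
        = Ideal.Quotient.mk _ (b * Φ z) := rfl
      rw [this, Ideal.Quotient.eq, Ideal.mem_span_singleton, map_mul, ← sub_mul]
      exact (hab j).mul_right _
    rw [hΨ, hΨ, h1, map_smul, h3, map_smul, h2]
  refine ⟨Ψ, fun a => ⟨Φ a, key a _ (by simp)⟩, fun b => ?_⟩
  obtain ⟨z, hz⟩ := (e (∑ j, lam j)).surjective (Ideal.Quotient.mk _ b)
  obtain ⟨a, rfl⟩ := Ideal.Quotient.mk_surjective z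
  rw [he, Ideal.Quotient.eq, Ideal.mem_span_singleton] at hz
  exact ⟨a, key a b fun j => (pow_dvd_pow _
    (Finset.single_le_sum (fun _ _ => Nat.zero_le _) (Finset.mem_univ j))).trans hz⟩

lemma aux_gl_inj {K : Type} [Field K] {N : ℕ} (g : GL (Fin N) K) :
    Function.Injective (Matrix.mulVecLin (g : Matrix (Fin N) (Fin N) K)) := by
  exact Matrix.mulVec_injective_of_isUnit g.isUnit

end Aux

/-- **Identity (3.11)**: let `p` be monic irreducible of degree `k` over `F_q`, `λ ⊢ m`, and
let `g ∈ GL(km, q)` have `F_q[x]`-module type `⊕_i F_q[x]/(p^{λ_i})`, while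
`g' ∈ GL(m, q^k)` has `F_{q^k}[x]`-module type `⊕_i F_{q^k}[x]/((x-y)^{λ_i})`. Then for a
partition `μ` of `km`: `ψ^q_μ(g) = ψ^{q^k}_ν(g')` whenever `μ = k·ν`, and `ψ^q_μ(g) = 0` if
`μ` is not of this form. -/
theorem flag_count_field_extension
    (k m : ℕ) (hk : 1 ≤ k) (hm : 1 ≤ m)
    (p : Polynomial F) (hmonic : p.Monic) (hirr : Irreducible p) (hdeg : p.natDegree = k)
    {r : ℕ} (lam : Fin r → ℕ) (hanti : Antitone lam) (hpos : ∀ i, 0 < lam i)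
    (hsum : ∑ i, lam i = m)
    (g : GL (Fin (k * m)) F)
    (hg : Nonempty
      ((Module.AEval' (Matrix.mulVecLin (g : Matrix (Fin (k * m)) (Fin (k * m)) F)))
        ≃ₗ[Polynomial F] ∀ i : Fin r, Polynomial F ⧸ Ideal.span {p ^ lam i}))
    (E : Type) [Field E] [Fintype E] [DecidableEq E]
    (hE : Fintype.card E = (Fintype.card F) ^ k)
    (y : E) (hy : y ≠ 0)
    (g' : GL (Fin m) E)
    (hg' : Nonempty
      ((Module.AEval' (Matrix.mulVecLin (g' : Matrix (Fin m) (Fin m) E)))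
        ≃ₗ[Polynomial E] ∀ i : Fin r,
          Polynomial E ⧸ Ideal.span {(Polynomial.X - Polynomial.C y) ^ lam i}))
    {s : ℕ} (μ : Fin s → ℕ) (hμanti : Antitone μ) (hμpos : ∀ j, 0 < μ j)
    (hμsum : ∑ j, μ j = k * m) :
    (∀ ν : Fin s → ℕ, (∀ j, μ j = k * ν j) → flagCount F g μ = flagCount E g' ν) ∧
    ((¬ ∀ j : Fin s, k ∣ μ j) → flagCount F g μ = 0) := by
  classical
  subst hdeg
  obtain ⟨Ψ, H1, H2⟩ := aux_key p hirr hE y lam _ _ hg hg'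
  obtain ⟨e, he⟩ := aux_equiv _ _ Ψ H1 H2
  have hfr : ∀ W, Module.finrank F W.1 = p.natDegree * Module.finrank E (e W).1 := by
    intro W
    have h1 := Module.natCard_eq_pow_finrank (K := F) (V := W.1)
    have h2 := Module.natCard_eq_pow_finrank (K := E) (V := (e W).1)
    have h3 : Nat.card W.1 = Nat.card (e W).1 :=
      Nat.card_congr (Ψ.toEquiv.subtypeEquiv fun v => by
        rw [he]; simp)
    rw [h1, h2, Nat.card_eq_fintype_card, Nat.card_eq_fintype_card, hE, ← pow_mul] at h3
    exact Nat.pow_right_injective Fintype.one_lt_card h3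
  have hle : ∀ W W', W.1 ≤ W'.1 ↔ (e W).1 ≤ (e W').1 := by
    intro W W'
    constructor
    · intro h w hw
      rw [he] at hw ⊢
      exact h hw
    · intro h w hw
      have := @h (Ψ w)
      rw [he, he] at this
      simpa [hw] using this
  have hF := aux_map_eq_iff _ (aux_gl_inj g)
  have hE' := aux_map_eq_iff _ (aux_gl_inj g')
  constructor
  · intro ν hν
    have hsumν : ∀ j : Fin s, ∑ l ∈ Finset.univ.filter (fun l : Fin s => l ≤ j), μ l =
        p.natDegree * ∑ l ∈ Finset.univ.filter (fun l : Fin s => l ≤ j), ν l := by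
      intro j
      rw [Finset.mul_sum]
      exact Finset.sum_congr rfl fun l _ => hν l
    unfold flagCount
    refine Nat.card_congr
      ⟨fun W => ⟨fun j => (e ⟨W.1 j, (hF _).1 (W.2.2.2 j)⟩).1, ?_, ?_, ?_⟩,
       fun W => ⟨fun j => (e.symm ⟨W.1 j, (hE' _).1 (W.2.2.2 j)⟩).1, ?_, ?_, ?_⟩, ?_, ?_⟩
    · intro j j' h
      exact (hle _ _).1 (W.2.1 j j' h)
    · intro j
      have := hfr ⟨W.1 j, (hF _).1 (W.2.2.2 j)⟩
      rw [W.2.2.1 j, hsumν] at this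
      exact (Nat.eq_of_mul_eq_mul_left hk this).symm
    · intro j
      exact (hE' _).2 (e _).2
    · intro j j' h
      rw [hle, e.apply_symm_apply, e.apply_symm_apply]
      exact W.2.1 j j' h
    · intro j
      rw [hfr, e.apply_symm_apply, hsumν, W.2.2.1 j]
    · intro j
      exact (hF _).2 (e.symm _).2
    · intro W
      apply Subtype.ext
      funext j
      exact congrArg Subtype.val (e.symm_apply_apply _)
    · intro W
      apply Subtype.ext
      funext j
      exact congrArg Subtype.val (e.apply_symm_apply _)
  · intro hnd
    unfold flagCount
    rw [Nat.card_eq_zero]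
    left
    refine ⟨fun W => hnd ?_⟩
    have hd : ∀ j : Fin s, p.natDegree ∣
        ∑ l ∈ Finset.univ.filter (fun l : Fin s => l ≤ j), μ l := by
      intro j
      rw [← W.2.2.1 j, hfr ⟨W.1 j, (hF _).1 (W.2.2.2 j)⟩]
      exact dvd_mul_right _ _
    intro j
    induction j using WellFoundedLT.induction with
    | ind j ih =>
      have h := hd j
      rw [← Finset.sum_erase_add _ _ (show j ∈ Finset.univ.filter (fun l : Fin s => l ≤ j) by simp)] at h
      refine (Nat.dvd_add_right (Finset.dvd_sum fun l hl => ih l ?_)).1 h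
      simp only [Finset.mem_erase, Finset.mem_filter, Finset.mem_univ, true_and] at hl
      exact lt_of_le_of_ne hl.2 hl.1
end

section
/- For integers n ≥ 1 and 1 ≤ r ≤ n−1, let N_{n,r}(m) denote the number of subsets S ⊆ {1,...,n} with |S| = r and Σ_{k∈S} k = m. Then max_m N_{n,r}(m) / C(n,r) tends to 0 as n → ∞ uniformly in r: for every ε > 0 there exists N such that for all n ≥ N, all r with 1 ≤ r ≤ n−1, and all integers m, one has N_{n,r}(m) ≤ ε·C(n,r), where C(n,r) = n!/(r!(n−r)!) = Σ_m N_{n,r}(m). (The uniform bound (5.4)–(5.5) established and used in the proof of Proposition 5.8.) -/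
/-!
STATEMENT 18: the uniform bound (5.4)–(5.5) used in the proof of Proposition 5.8.
-/

/-- `N_{n,r}(m)`: the number of subsets `S ⊆ {1,...,n}` with `|S| = r` and `∑_{k ∈ S} k = m`. -/
def subsetSumCount (n r m : ℕ) : ℕ :=
  ((Finset.Icc 1 n).powerset.filter (fun S => S.card = r ∧ S.sum id = m)).card

open Finset

def fullBlk (n p b : ℕ) : Prop := 1 ≤ b ∧ b < (n + 1) / p

def trivS (n p : ℕ) (S : Finset ℕ) : Prop :=
  ∀ k l, fullBlk n p (k / p) → k / p = l / p → k ∈ S → l ∈ S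

def rot (p b i k : ℕ) : ℕ := if k / p = b then p * b + (k + i) % p else k

lemma rot_div {p : ℕ} (hp : 0 < p) (b i k : ℕ) : rot p b i k / p = k / p := by
  unfold rot
  split_ifs with h
  · rw [Nat.mul_add_div hp, Nat.div_eq_of_lt (Nat.mod_lt _ hp), h]; rfl
  · rfl

lemma rot_inj {p : ℕ} (hp : 0 < p) (b i : ℕ) : Function.Injective (rot p b i) := by
  intro k l h
  have hd : k / p = l / p := by rw [← rot_div hp b i k, h, rot_div hp]
  unfold rot at h
  by_cases hk : k / p = b
  · rw [if_pos hk, if_pos (hd ▸ hk)] at h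
    have h1 : (k + i) ≡ (l + i) [MOD p] := Nat.add_left_cancel h
    have h2 : k % p = l % p := Nat.ModEq.add_right_cancel' i h1
    rw [← Nat.div_add_mod k p, ← Nat.div_add_mod l p, hd, h2]
  · rw [if_neg hk, if_neg (hd ▸ hk)] at h
    exact h

lemma rot_cast (p b i k : ℕ) :
    ((rot p b i k : ℕ) : ZMod p) = (k : ZMod p) + if k / p = b then (i : ZMod p) else 0 := by
  unfold rot
  split_ifs <;> simp

lemma rot_mem {n p b : ℕ} (hp : 0 < p) (hb : fullBlk n p b) (i : ℕ) {k : ℕ}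
    (hk : k ∈ Icc 1 n) : rot p b i k ∈ Icc 1 n := by
  unfold rot
  split_ifs with h
  · obtain ⟨h1, h2⟩ := hb
    have h3 : (b + 1) * p ≤ n + 1 := (Nat.le_div_iff_mul_le hp).1 h2
    have h4 := Nat.mod_lt (k + i) hp
    have h5 : p * 1 ≤ p * b := Nat.mul_le_mul_left p h1
    rw [mem_Icc]
    constructor
    · omega
    · nlinarith
  · exact hk

def cnt (p : ℕ) (S : Finset ℕ) (b : ℕ) : ℕ := (S.filter (fun k => k / p = b)).card

lemma cnt_rot {p : ℕ} (hp : 0 < p) (b i : ℕ) (S : Finset ℕ) :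
    cnt p (S.image (rot p b i)) = cnt p S := by
  funext c
  unfold cnt
  rw [filter_image, card_image_of_injective _ (rot_inj hp b i)]
  simp only [rot_div hp]

lemma sum_rot {p : ℕ} (hp : 0 < p) (b i : ℕ) (S : Finset ℕ) :
    (((S.image (rot p b i)).sum id : ℕ) : ZMod p) = ((S.sum id : ℕ) : ZMod p)
      + (cnt p S b : ZMod p) * i := by
  rw [sum_image (fun _ _ _ _ h => rot_inj hp b i h)]
  simp only [id, Nat.cast_sum, rot_cast, sum_add_distrib, cnt]
  rw [← sum_filter]
  simp

lemma blk_card {p : ℕ} (hp : 0 < p) (b : ℕ) (k : ℕ) :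
    k ∈ Ico (p * b) (p * b + p) ↔ k / p = b := by
  rw [mem_Ico, Nat.div_eq_iff hp]
  have := mul_comm p b
  constructor <;> rintro ⟨h1, h2⟩ <;> constructor <;> omega

lemma exists_blk {n p : ℕ} (hp : 0 < p) (S : Finset ℕ) (h : ¬ trivS n p S) :
    ∃ b, fullBlk n p b ∧ 0 < cnt p S b ∧ cnt p S b < p := by
  unfold trivS at h
  push Not at h
  obtain ⟨k, l, hf, hkl, hk, hl⟩ := h
  refine ⟨k / p, hf, ?_, ?_⟩
  · exact card_pos.2 ⟨k, by simp [hk]⟩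
  · have : S.filter (fun x => x / p = k / p) ⊂ Ico (p * (k/p)) (p * (k/p) + p) := by
      rw [Finset.ssubset_iff_of_subset]
      · exact ⟨l, (blk_card hp _ _).2 hkl.symm, by simp [hl]⟩
      · intro x hx
        exact (blk_card hp _ _).2 (mem_filter.1 hx).2
    have := card_lt_card this
    simpa [cnt] using this

open Classical in
noncomputable def pick (n p : ℕ) (c : ℕ → ℕ) : ℕ :=
  if h : ∃ b, fullBlk n p b ∧ 0 < c b ∧ c b < p then h.choose else 0

lemma pick_spec {n p : ℕ} {c : ℕ → ℕ} (h : ∃ b, fullBlk n p b ∧ 0 < c b ∧ c b < p) :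
    fullBlk n p (pick n p c) ∧ 0 < c (pick n p c) ∧ c (pick n p c) < p := by
  unfold pick
  rw [dif_pos h]
  exact h.choose_spec

open Classical in
lemma nontriv_bound (n r m p : ℕ) (hp : p.Prime) :
    p * (((Icc 1 n).powersetCard r).filter (fun S => ¬ trivS n p S ∧ S.sum id = m)).card
      ≤ n.choose r := by
  have hp0 := hp.pos
  haveI := Fact.mk hp
  have e : n.choose r = ((Icc 1 n).powersetCard r).card := by simp
  rw [e]
  nth_rewrite 1 [← card_range p]
  rw [← card_product]
  apply card_le_card_of_injOn (fun q => q.2.image (rot p (pick n p (cnt p q.2)) q.1))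
  · rintro ⟨i, S⟩ h
    simp only [coe_product, Set.mem_prod, mem_coe, mem_filter, mem_powersetCard] at h ⊢
    obtain ⟨hi, ⟨hS, hc⟩, ht, hs⟩ := h
    have hb := (pick_spec (exists_blk hp0 S ht)).1
    constructor
    · intro x hx
      obtain ⟨k, hk, rfl⟩ := mem_image.1 hx
      exact rot_mem hp0 hb i (hS hk)
    · rw [card_image_of_injective _ (rot_inj hp0 _ _), hc]
  · rintro ⟨i, S⟩ h ⟨j, S'⟩ h' heq
    simp only [coe_product, Set.mem_prod, mem_coe, mem_filter, mem_powersetCard, mem_range] at h h' heq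
    obtain ⟨hi, ⟨hS, hc⟩, ht, hs⟩ := h
    obtain ⟨hj, ⟨hS', hc'⟩, ht', hs'⟩ := h'
    have hcnt : cnt p S = cnt p S' := by
      have := congrArg (cnt p) heq
      rwa [cnt_rot hp0, cnt_rot hp0] at this
    have hsp := pick_spec (exists_blk hp0 S ht)
    rw [← hcnt] at heq
    have hsum := congrArg (fun S : Finset ℕ => ((S.sum id : ℕ) : ZMod p)) heq
    simp only [sum_rot hp0, hs, hs', ← hcnt] at hsum
    have h1 := add_left_cancel hsum
    have hne : ((cnt p S (pick n p (cnt p S)) : ℕ) : ZMod p) ≠ 0 := by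
      rw [Ne, ZMod.natCast_eq_zero_iff]
      exact fun hd => absurd (Nat.le_of_dvd hsp.2.1 hd) (not_le.2 hsp.2.2)
    have h2 := mul_left_cancel₀ hne h1
    rw [ZMod.natCast_eq_natCast_iff] at h2
    have h3 : i = j := Nat.ModEq.eq_of_lt_of_lt h2 hi hj
    subst h3
    have := image_injective (rot_inj hp0 _ _) heq
    rw [this]

lemma two_others {p : ℕ} (hp : 3 ≤ p) (x : ℕ) :
    ∃ z w, z ≠ x ∧ w ≠ x ∧ z ≠ w ∧ x / p = z / p ∧ x / p = w / p := by
  have hx : x ∈ Ico (p * (x / p)) (p * (x / p) + p) := (blk_card (by omega) _ _).2 rfl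
  have h : 1 < ((Ico (p * (x / p)) (p * (x / p) + p)).erase x).card := by
    rw [card_erase_of_mem hx]; simp; omega
  obtain ⟨z, hz, w, hw, hzw⟩ := one_lt_card.1 h
  rw [mem_erase, blk_card (by omega)] at hz hw
  exact ⟨z, w, hz.1, hw.1, hzw, hz.2.symm, hw.2.symm⟩

lemma x_unique {n p : ℕ} (hp : 3 ≤ p) {S T : Finset ℕ} {x y x' y' : ℕ}
    (hS : trivS n p S) (hT : trivS n p T) (hf : fullBlk n p (x / p))
    (hx : x ∈ S) (hy : y ∉ S) (h : insert y (S.erase x) = insert y' (T.erase x')) : x = x' := by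
  by_contra hne
  obtain ⟨z, w, hzx, hwx, hzw, hz, hw⟩ := two_others hp x
  have hzS := hS x z hf hz hx
  have hwS := hS x w hf hw hx
  have e := fun k => Finset.ext_iff.1 h k
  simp only [mem_insert, mem_erase] at e
  have hxT : x ∉ T := by
    intro hxT
    have := (e x).2 (Or.inr ⟨hne, hxT⟩)
    grind
  have hzT : z ∉ T := fun q => hxT (hT z x (hz ▸ hf) hz.symm q)
  have hwT : w ∉ T := fun q => hxT (hT w x (hw ▸ hf) hw.symm q)
  have := e z
  have := e w
  grind

lemma y_unique {n p : ℕ} (hp : 3 ≤ p) {S T : Finset ℕ} {x y x' y' : ℕ}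
    (hS : trivS n p S) (hT : trivS n p T) (hf : fullBlk n p (y / p))
    (hx : x ∈ S) (hy : y ∉ S) (h : insert y (S.erase x) = insert y' (T.erase x')) : y = y' := by
  by_contra hne
  obtain ⟨z, w, hzx, hwx, hzw, hz, hw⟩ := two_others hp y
  have hzS : z ∉ S := fun q => hy (hS z y (hz ▸ hf) hz.symm q)
  have hwS : w ∉ S := fun q => hy (hS w y (hw ▸ hf) hw.symm q)
  have e := fun k => Finset.ext_iff.1 h k
  simp only [mem_insert, mem_erase] at e
  have hyT : y ∈ T := by
    have := e y
    grind
  have hzT := hT y z hf hz hyT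
  have hwT := hT y w hf hw hyT
  have := e z
  have := e w
  grind

open Classical in
noncomputable def code (n p k : ℕ) : ℕ := if fullBlk n p (k / p) then 0 else k

lemma code_mem {n p k : ℕ} (hp : 0 < p) (hk : k ∈ Icc 1 n) :
    code n p k ∈ range p ∪ Ico (n + 1 - p) (n + 1) := by
  rw [mem_Icc] at hk
  unfold code
  split_ifs with h
  · simp [hp]
  · unfold fullBlk at h
    by_cases h1 : k < p
    · simp [h1]
    · have h2 : 1 ≤ k / p := (Nat.le_div_iff_mul_le hp).2 (by omega)
      have h3 : (n + 1) / p ≤ k / p := by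
        by_contra h3; exact h ⟨h2, by omega⟩
      have h4 : (n + 1) / p * p ≤ k := (Nat.le_div_iff_mul_le hp).1 h3
      have h5 := Nat.div_add_mod (n + 1) p
      have h6 := Nat.mod_lt (n + 1) hp
      rw [mul_comm] at h5
      rw [mem_union, mem_Ico]
      right
      omega

lemma code_eq {n p x x' : ℕ} (hx : 1 ≤ x) (h : code n p x = code n p x')
    (h2 : fullBlk n p (x / p) → x = x') : x = x' := by
  by_cases hf : fullBlk n p (x / p)
  · exact h2 hf
  · unfold code at h
    rw [if_neg hf] at h
    split_ifs at h
    · omega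
    · exact h

open Classical in
lemma triv_bound (n r p : ℕ) (hp : 3 ≤ p) (hr : 1 ≤ r) (hrn : r + 1 ≤ n) :
    (((Icc 1 n).powersetCard r).filter (fun S => trivS n p S)).card * (n - 1)
      ≤ n.choose r * ((2 * p) * (2 * p)) := by
  have e : n.choose r = ((Icc 1 n).powersetCard r).card := by simp
  set C := range p ∪ Ico (n + 1 - p) (n + 1) with hC
  have hCc : C.card ≤ 2 * p := by
    refine (card_union_le _ _).trans ?_
    simp; omega
  have key : ((((Icc 1 n).powersetCard r).filter (fun S => trivS n p S)).sigma
      (fun S => S ×ˢ (Icc 1 n \ S))).card ≤ (((Icc 1 n).powersetCard r) ×ˢ (C ×ˢ C)).card := by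
    apply card_le_card_of_injOn
      (fun q => (insert q.2.2 (q.1.erase q.2.1), (code n p q.2.1, code n p q.2.2)))
    · rintro ⟨S, x, y⟩ h
      simp only [mem_coe, mem_sigma, mem_product, mem_filter, mem_powersetCard, mem_sdiff] at h ⊢
      obtain ⟨⟨⟨hS, hc⟩, ht⟩, hx, hy, hyS⟩ := h
      refine ⟨⟨?_, ?_⟩, code_mem (by omega) (hS hx), code_mem (by omega) hy⟩
      · intro k hk
        rw [mem_insert, mem_erase] at hk
        rcases hk with rfl | hk
        · exact hy
        · exact hS hk.2
      · rw [card_insert_of_notMem (by simp [hyS]), card_erase_of_mem hx]; omega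
    · rintro ⟨S, x, y⟩ h ⟨S', x', y'⟩ h' heq
      simp only [mem_coe, mem_sigma, mem_product, mem_filter, mem_powersetCard, mem_sdiff,
        Prod.mk.injEq] at h h' heq
      obtain ⟨⟨⟨hS, hc⟩, ht⟩, hx, hy, hyS⟩ := h
      obtain ⟨⟨⟨hS', hc'⟩, ht'⟩, hx', hy', hyS'⟩ := h'
      obtain ⟨h1, h2, h3⟩ := heq
      have ex : x = x' := code_eq (mem_Icc.1 (hS hx)).1 h2
        (fun hf => x_unique hp ht ht' hf hx hyS h1)
      have ey : y = y' := code_eq (mem_Icc.1 hy).1 h3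
        (fun hf => y_unique hp ht ht' hf hx hyS h1)
      subst ex ey
      have : S = S' := by
        ext k
        have := Finset.ext_iff.1 h1 k
        simp only [mem_insert, mem_erase] at this
        grind
      rw [this]
  rw [card_sigma, card_product, card_product, ← e] at key
  have h2 : ∀ S ∈ ((Icc 1 n).powersetCard r).filter (fun S => trivS n p S),
      n - 1 ≤ (S ×ˢ (Icc 1 n \ S)).card := by
    intro S hS
    obtain ⟨h1, h2⟩ := mem_powersetCard.1 (mem_filter.1 hS).1
    rw [card_product, card_sdiff_of_subset h1, h2, Nat.card_Icc]
    obtain ⟨a, rfl⟩ := Nat.exists_eq_add_of_le hr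
    obtain ⟨b, rfl⟩ := Nat.exists_eq_add_of_le hrn
    have : 1 + a + 1 + b + 1 - 1 - (1 + a) = b + 1 := by omega
    rw [this]
    have : 1 + a + 1 + b - 1 = a + b + 1 := by omega
    rw [this]
    nlinarith [Nat.zero_le (a * b)]
  have h3 := card_nsmul_le_sum _ _ _ h2
  rw [smul_eq_mul] at h3
  exact (h3.trans key).trans (Nat.mul_le_mul_left _ (Nat.mul_le_mul hCc hCc))

/-- **The uniform bound (5.4)–(5.5)**: `max_m N_{n,r}(m) / C(n,r)` tends to `0` as `n → ∞`
uniformly in `r` with `1 ≤ r ≤ n-1`. -/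
theorem subsetSumCount_uniformly_small :
    ∀ ε : ℝ, 0 < ε → ∃ N : ℕ, ∀ n : ℕ, N ≤ n → ∀ r : ℕ, 1 ≤ r → r ≤ n - 1 → ∀ m : ℕ,
      (subsetSumCount n r m : ℝ) ≤ ε * (Nat.choose n r : ℝ) := by
  classical
  intro ε hε
  obtain ⟨K, hK⟩ := exists_nat_gt (2 / ε)
  obtain ⟨p, hpK, hp⟩ := Nat.exists_infinite_primes (K + 3)
  obtain ⟨M, hM⟩ := exists_nat_gt (2 * ((2 * p) * (2 * p)) / ε : ℝ)
  refine ⟨M + 2, fun n hn r hr hrn m => ?_⟩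
  have hA := nontriv_bound n r m p hp
  have hB := triv_bound n r p (by omega) hr (by omega)
  set A := (((Icc 1 n).powersetCard r).filter (fun S => ¬ trivS n p S ∧ S.sum id = m)).card
  set B := (((Icc 1 n).powersetCard r).filter (fun S => trivS n p S)).card
  have hAB : subsetSumCount n r m ≤ A + B := by
    refine le_trans (card_le_card ?_) (card_union_le _ _)
    intro S hS
    simp only [mem_filter, mem_powerset, mem_union, mem_powersetCard] at hS ⊢
    tauto
  have hAB' : (subsetSumCount n r m : ℝ) ≤ A + B := by exact_mod_cast hAB
  have hA' : (p : ℝ) * A ≤ n.choose r := by exact_mod_cast hA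
  have hB' : (B : ℝ) * ((n - 1 : ℕ) : ℝ) ≤ n.choose r * ((2 * p) * (2 * p)) := by
    exact_mod_cast hB
  have hpr : 2 / ε ≤ p := hK.le.trans (by exact_mod_cast (by omega : K ≤ p))
  have hnr : 2 * ((2 * p) * (2 * p)) / ε ≤ ((n - 1 : ℕ) : ℝ) :=
    hM.le.trans (by exact_mod_cast (by omega : M ≤ n - 1))
  rw [div_le_iff₀ hε] at hpr hnr
  have hC : (0 : ℝ) ≤ n.choose r := by positivity
  have h1 : (A : ℝ) ≤ ε / 2 * n.choose r := by
    have : 2 * (A : ℝ) ≤ p * ε * A := by gcongr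
    nlinarith
  have hp0 : (0 : ℝ) < (2 * p) * (2 * p) := by
    have : (0 : ℝ) < p := by exact_mod_cast hp.pos
    positivity
  have h2 : (B : ℝ) ≤ ε / 2 * n.choose r := by
    have h3 : 2 * ((2 * p) * (2 * p)) * (B : ℝ) ≤ ((n - 1 : ℕ) : ℝ) * ε * B := by gcongr
    have h4 : ε * ((B : ℝ) * ((n - 1 : ℕ) : ℝ)) ≤ ε * (n.choose r * ((2 * p) * (2 * p))) := by
      gcongr
    have h5 : ((2 * p) * (2 * p)) * (B : ℝ) ≤ ((2 * p) * (2 * p)) * (ε / 2 * n.choose r) := by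
      linarith
    exact le_of_mul_le_mul_left h5 hp0
  linarith
end
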